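/- Uniform distance of minimizing motions from collisions: for every x̄ ∈ Ω there exist an open neighborhood 𝒰 ⊂ Ω of x̄ and a constant C > 0 such that for every x ∈ 𝒰 and every minimizer φ of A_x on D_0^{1,2}(1,+∞), the motion γ(t) = a t + φ(t) + x − a satisfies inf_{y ∈ Δ} ‖γ(t) − y‖_M ≥ C for all t ∈ [1, +∞). -/

import Mathlib

open MeasureTheory Real Set Filter Topology
open scoped RealInnerProductSpace ENNReal

noncomputable section
namespace NBodyHJ

attribute [local instance] Classical.propDecidable

abbrev Conf (d N : ℕ) := Fin N → EuclideanSpace ℝ (Fin d)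

variable {d N : ℕ}

/-- The mass inner product on the configuration space. -/
def minner (m : Fin N → ℝ) (x y : Conf d N) : ℝ := ∑ i, m i * ⟪x i, y i⟫

/-- The mass norm on the configuration space. -/
def mnorm (m : Fin N → ℝ) (x : Conf d N) : ℝ := Real.sqrt (minner m x x)

/-- Membership in the zero-barycenter configuration space `X`. -/
def inX (m : Fin N → ℝ) (x : Conf d N) : Prop := ∑ i, m i • x i = 0

/-- Collision configurations. -/
def collision (x : Conf d N) : Prop := ∃ i j, i ≠ j ∧ x i = x j

/-- Membership in the collision-free zero-barycenter space `Ω`. -/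
def inOmega (m : Fin N → ℝ) (x : Conf d N) : Prop := inX m x ∧ ¬ collision x

/-- The Newtonian potential (with junk value `0` for a colliding pair). -/
def U (m : Fin N → ℝ) (x : Conf d N) : ℝ :=
  ∑ i : Fin N, ∑ j : Fin N, if i < j then m i * m j / ‖x i - x j‖ else 0

/-- The time interval `(t₀, T)`, where `T ∈ (t₀, +∞]` is extended-real. -/
def timeSet (t0 : ℝ) (T : EReal) : Set ℝ := {t : ℝ | t0 < t ∧ (t : EReal) < T}

/-- Membership of the pair (curve, derivative) `(φ, φ')` in `D₀^{1,2}(t₀, T)`: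
`φ` starts at `0`, takes values in `X`, is the integral of `φ'` (hence locally
absolutely continuous), and `φ'` has finite `L²` mass norm on `(t₀, T)`. -/
def InD (m : Fin N → ℝ) (t0 : ℝ) (T : EReal) (φ φ' : ℝ → Conf d N) : Prop :=
  φ t0 = 0 ∧
  (∀ t : ℝ, t0 ≤ t → (t : EReal) < T → inX m (φ t)) ∧
  (∀ t : ℝ, t0 ≤ t → (t : EReal) < T → φ t = ∫ s in Set.Ioc t0 t, φ' s) ∧
  (∀ t : ℝ, t0 ≤ t → (t : EReal) < T → IntegrableOn φ' (Set.Ioc t0 t)) ∧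
  IntegrableOn (fun t => (mnorm m (φ' t)) ^ 2) (timeSet t0 T)

/-- The norm `‖φ‖_{D_T}`. -/
def Dnorm (m : Fin N → ℝ) (t0 : ℝ) (T : EReal) (φ' : ℝ → Conf d N) : ℝ :=
  Real.sqrt (∫ t in timeSet t0 T, (mnorm m (φ' t)) ^ 2)

/-- The motion `γ(t) = φ(t) + t a + x - a` associated with `φ` in the hyperbolic case. -/
def hypCurve (a x : Conf d N) (φ : ℝ → Conf d N) (t : ℝ) : Conf d N :=
  φ t + t • a + x - a

/-- The integrand of the hyperbolic renormalized Lagrangian action. -/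
def hypIntegrand (m : Fin N → ℝ) (a x : Conf d N) (φ φ' : ℝ → Conf d N) (t : ℝ) : ℝ :=
  (mnorm m (φ' t)) ^ 2 / 2 + U m (hypCurve a x φ t) - U m (t • a)

/-- The hyperbolic renormalized Lagrangian action `A_{x,[1,T]}(φ)`, with values in
`ℝ ∪ {+∞}` : it equals the integral of the renormalized Lagrangian if this integrand is
integrable and the motion is a.e. collision-free, and `+∞` otherwise. -/
def hypAction (m : Fin N → ℝ) (a x : Conf d N) (T : EReal) (φ φ' : ℝ → Conf d N) : EReal :=
  if IntegrableOn (hypIntegrand m a x φ φ') (timeSet 1 T) ∧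
      (∀ᵐ t ∂volume.restrict (timeSet 1 T), ¬ collision (hypCurve a x φ t))
  then ((∫ t in timeSet 1 T, hypIntegrand m a x φ φ' t : ℝ) : EReal)
  else (⊤ : EReal)

/-- The infimum of the hyperbolic renormalized action over `D₀^{1,2}(1,T)`. -/
def hypInf (m : Fin N → ℝ) (a x : Conf d N) (T : EReal) : EReal :=
  ⨅ (φ : ℝ → Conf d N) (φ' : ℝ → Conf d N) (_ : InD m 1 T φ φ'), hypAction m a x T φ φ'

/-- The renormalized value function `v(x)` in the hyperbolic case. -/
def hypValue (m : Fin N → ℝ) (a x : Conf d N) : ℝ :=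
  (hypInf m a x ⊤).toReal - minner m a x

section GaussianKernel

variable {V : Type*} [NormedAddCommGroup V] [InnerProductSpace ℝ V] [FiniteDimensional ℝ V]
  [MeasurableSpace V] [BorelSpace V]

/-- Gaussian integral representation of the Newtonian kernel. -/
lemma lintegral_gaussian_Ioi_eq_inv_enorm {W : Type*} [NormedAddCommGroup W] (z : W) :
    ∫⁻ l in Ioi (0 : ℝ), ENNReal.ofReal (2 / √π * exp (-(l ^ 2 * ‖z‖ ^ 2))) = ‖z‖ₑ⁻¹ := by
  rcases eq_or_ne z 0 with rfl | hz
  · simp [ENNReal.mul_top, pi_pos]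
  · have hz' : 0 < ‖z‖ := norm_pos_iff.mpr hz
    have hI : Integrable (fun l : ℝ => 2 / √π * exp (-(l ^ 2 * ‖z‖ ^ 2)))
        (volume.restrict (Ioi 0)) := by
      have := (integrable_exp_neg_mul_sq (b := ‖z‖ ^ 2) (by positivity)).integrableOn
        (s := Ioi (0 : ℝ))
      refine (this.const_mul (2 / √π)).congr (ae_of_all _ fun l => ?_)
      simp only; congr 2; ring
    rw [← ofReal_integral_eq_lintegral_ofReal hI (ae_of_all _ fun l => by positivity)]
    have h1 : ∫ l in Ioi (0 : ℝ), 2 / √π * exp (-(l ^ 2 * ‖z‖ ^ 2)) = ‖z‖⁻¹ := by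
      rw [integral_const_mul]
      have := integral_gaussian_Ioi (‖z‖ ^ 2)
      rw [show (fun l : ℝ => exp (-(l ^ 2 * ‖z‖ ^ 2))) = fun l => exp (-‖z‖ ^ 2 * l ^ 2) by
        funext l; congr 1; ring, this, Real.sqrt_div pi_pos.le, Real.sqrt_sq hz'.le]
      have : √π ≠ 0 := by positivity
      field_simp
    rw [h1, ENNReal.ofReal_inv_of_pos hz', ofReal_norm]

lemma lintegral_exp_neg_mul_sq_norm {b : ℝ} (hb : 0 < b) :
    ∫⁻ v : V, ENNReal.ofReal (exp (-b * ‖v‖ ^ 2)) =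
      ENNReal.ofReal ((π / b) ^ (Module.finrank ℝ V / 2 : ℝ)) := by
  have h := GaussianFourier.integral_rexp_neg_mul_sq_norm (V := V) hb
  have hpos : 0 < (π / b) ^ (Module.finrank ℝ V / 2 : ℝ) := by positivity
  rw [← h, ofReal_integral_eq_lintegral_ofReal _ (ae_of_all _ fun v => (exp_pos _).le)]
  exact Integrable.of_integral_ne_zero (by rw [h]; exact ne_of_gt hpos)

/-- The isotropic Gaussian density of variance `u / 2` per coordinate. -/
def gaussDensity (V : Type*) [NormedAddCommGroup V] [InnerProductSpace ℝ V] (u : ℝ) (ξ : V) : ℝ :=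
  (π * u) ^ (-(Module.finrank ℝ V / 2 : ℝ)) * exp (-(1 / u) * ‖ξ‖ ^ 2)

lemma gaussDensity_nonneg {W : Type*} [NormedAddCommGroup W] [InnerProductSpace ℝ W] {u : ℝ}
    (hu : 0 < u) (ξ : W) : 0 ≤ gaussDensity W u ξ := by
  unfold gaussDensity; positivity

lemma lintegral_gaussDensity {u : ℝ} (hu : 0 < u) :
    ∫⁻ ξ : V, ENNReal.ofReal (gaussDensity V u ξ) = 1 := by
  have hpu : 0 < π * u := by positivity
  simp only [gaussDensity, ENNReal.ofReal_mul (rpow_nonneg hpu.le _)]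
  rw [lintegral_const_mul _ (by fun_prop), lintegral_exp_neg_mul_sq_norm (by positivity),
    ← ENNReal.ofReal_mul (by positivity), show π / (1 / u) = π * u by field_simp,
    ← rpow_add hpu]
  simp

lemma lintegral_sq_norm_mul_gaussDensity_le {u : ℝ} (hu : 0 < u) :
    ∫⁻ ξ : V, ENNReal.ofReal (gaussDensity V u ξ) * ENNReal.ofReal (‖ξ‖ ^ 2) ≤
      ENNReal.ofReal (2 * 2 ^ (Module.finrank ℝ V / 2 : ℝ) * u) := by
  have hpu : 0 < π * u := by positivity
  calc _ ≤ ∫⁻ ξ : V, ENNReal.ofReal ((π * u) ^ (-(Module.finrank ℝ V / 2 : ℝ)) * (2 * u)) *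
        ENNReal.ofReal (exp (-(1 / (2 * u)) * ‖ξ‖ ^ 2)) := by
        refine lintegral_mono fun ξ => ?_
        rw [← ENNReal.ofReal_mul (gaussDensity_nonneg hu ξ), ← ENNReal.ofReal_mul (by positivity)]
        refine ENNReal.ofReal_le_ofReal ?_
        have h1 : ‖ξ‖ ^ 2 ≤ 2 * u * exp ((1 / (2 * u)) * ‖ξ‖ ^ 2) := by
          have := add_one_le_exp ((1 / (2 * u)) * ‖ξ‖ ^ 2)
          calc ‖ξ‖ ^ 2 = 2 * u * ((1 / (2 * u)) * ‖ξ‖ ^ 2) := by field_simp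
            _ ≤ _ := by gcongr; linarith
        calc gaussDensity V u ξ * ‖ξ‖ ^ 2
            ≤ gaussDensity V u ξ * (2 * u * exp ((1 / (2 * u)) * ‖ξ‖ ^ 2)) := by
              gcongr; exact gaussDensity_nonneg hu ξ
          _ = (π * u) ^ (-(Module.finrank ℝ V / 2 : ℝ)) * (2 * u) *
              (exp (-(1 / u) * ‖ξ‖ ^ 2) * exp ((1 / (2 * u)) * ‖ξ‖ ^ 2)) := by
              unfold gaussDensity; ring
          _ = _ := by
              rw [← exp_add]; congr 2; field_simp; ring
    _ = _ := by
        rw [lintegral_const_mul _ (by fun_prop), lintegral_exp_neg_mul_sq_norm (by positivity),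
          ← ENNReal.ofReal_mul (by positivity), show π / (1 / (2 * u)) = 2 * (π * u) by field_simp,
          mul_rpow (by norm_num) hpu.le, rpow_neg hpu.le]
        congr 1
        have : (π * u) ^ (Module.finrank ℝ V / 2 : ℝ) ≠ 0 := by positivity
        field_simp

lemma lintegral_gaussDensity_mul_exp {u : ℝ} (hu : 0 < u) (l f : ℝ) (y : V) :
    ∫⁻ ξ : V, ENNReal.ofReal (gaussDensity V u ξ) *
        ENNReal.ofReal (exp (-(l ^ 2 * ‖y + f • ξ‖ ^ 2))) =
      ENNReal.ofReal ((1 + l ^ 2 * f ^ 2 * u) ^ (-(Module.finrank ℝ V / 2 : ℝ)) *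
        exp (-(l ^ 2 * ‖y‖ ^ 2 / (1 + l ^ 2 * f ^ 2 * u)))) := by
  have hpu : 0 < π * u := by positivity
  have hD : 0 < 1 + l ^ 2 * f ^ 2 * u := by positivity
  set b : ℝ := l ^ 2 * f ^ 2 + 1 / u with hb
  have hb0 : 0 < b := by positivity
  have hbD : b = (1 + l ^ 2 * f ^ 2 * u) / u := by rw [hb]; field_simp; ring
  have key : ∀ ξ : V, ENNReal.ofReal (gaussDensity V u ξ) *
        ENNReal.ofReal (exp (-(l ^ 2 * ‖y + f • ξ‖ ^ 2))) =
      ENNReal.ofReal ((π * u) ^ (-(Module.finrank ℝ V / 2 : ℝ)) *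
        exp (-(l ^ 2 * ‖y‖ ^ 2 / (1 + l ^ 2 * f ^ 2 * u)))) *
        ENNReal.ofReal (exp (-b * ‖ξ + (l ^ 2 * f / b) • y‖ ^ 2)) := by
    intro ξ
    rw [← ENNReal.ofReal_mul (gaussDensity_nonneg hu ξ), ← ENNReal.ofReal_mul (by positivity)]
    congr 1
    unfold gaussDensity
    rw [mul_assoc, mul_assoc, ← exp_add, ← exp_add]
    congr 2
    rw [norm_add_sq_real, norm_add_sq_real, norm_smul, norm_smul, real_inner_smul_right,
      real_inner_smul_right, real_inner_comm y ξ, mul_pow, mul_pow, norm_eq_abs, norm_eq_abs,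
      sq_abs, sq_abs, hbD]
    field_simp
    ring
  simp only [key]
  rw [lintegral_const_mul _ (by fun_prop),
    lintegral_add_right_eq_self (fun ξ : V => ENNReal.ofReal (exp (-b * ‖ξ‖ ^ 2))),
    lintegral_exp_neg_mul_sq_norm hb0, ← ENNReal.ofReal_mul (by positivity)]
  congr 1
  rw [show π / b = (π * u) * (1 + l ^ 2 * f ^ 2 * u)⁻¹ by rw [hbD]; field_simp,
    mul_rpow hpu.le (by positivity), rpow_neg hpu.le, rpow_neg hD.le, inv_rpow hD.le]
  have : (π * u) ^ (Module.finrank ℝ V / 2 : ℝ) ≠ 0 := by positivity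
  field_simp

end GaussianKernel

lemma lintegral_Ioi_gaussian_rescale {c : ℝ} (hc : 0 ≤ c) (Y : ℝ) :
    ∫⁻ l in Ioi (0 : ℝ), ENNReal.ofReal ((1 + c * l ^ 2)⁻¹ * exp (-(l ^ 2 * Y / (1 + c * l ^ 2)))) =
      ∫⁻ k in {k : ℝ | 0 < k ∧ c * k ^ 2 < 1},
        ENNReal.ofReal ((√(1 - c * k ^ 2))⁻¹ * exp (-(k ^ 2 * Y))) := by
  set S : Set ℝ := {k : ℝ | 0 < k ∧ c * k ^ 2 < 1} with hS
  have hSm : MeasurableSet S :=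
    (measurableSet_lt measurable_const measurable_id).inter
      (measurableSet_lt (f := fun k : ℝ => c * k ^ 2) (by fun_prop) measurable_const)
  let g : ℝ → ℝ := fun k => k / √(1 - c * k ^ 2)
  have hsq : ∀ k ∈ S, 0 < 1 - c * k ^ 2 := fun k hk => by linarith [hk.2]
  have hg2 : ∀ k ∈ S, g k ^ 2 = k ^ 2 / (1 - c * k ^ 2) := fun k hk => by
    simp only [g, div_pow, Real.sq_sqrt (hsq k hk).le]
  have hgpos : ∀ k ∈ S, 0 < g k := fun k hk =>
    div_pos hk.1 (Real.sqrt_pos.mpr (hsq k hk))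
  have hden : ∀ k ∈ S, 1 + c * g k ^ 2 = (1 - c * k ^ 2)⁻¹ := fun k hk => by
    have := (hsq k hk).ne'
    rw [hg2 k hk]; field_simp; ring
  have himg : g '' S = Ioi 0 := by
    ext l
    constructor
    · rintro ⟨k, hk, rfl⟩
      exact hgpos k hk
    · intro hl
      have hl : 0 < l := hl
      have h1 : 0 < 1 + c * l ^ 2 := by positivity
      have h2 : 0 < √(1 + c * l ^ 2) := Real.sqrt_pos.mpr h1
      have h3 : 1 - c * (l / √(1 + c * l ^ 2)) ^ 2 = (1 + c * l ^ 2)⁻¹ := by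
        rw [div_pow, Real.sq_sqrt h1.le]; field_simp; ring
      have h4 : 0 < (1 + c * l ^ 2)⁻¹ := by positivity
      refine ⟨l / √(1 + c * l ^ 2), ⟨by positivity, by linarith⟩, ?_⟩
      simp only [g]
      rw [h3, Real.sqrt_inv]
      field_simp
  have hinj : InjOn g S := by
    intro k hk k' hk' h
    have h1 := hden k hk
    have h2 := hden k' hk'
    rw [h, h2] at h1
    have h3 : 1 - c * k ^ 2 = 1 - c * k' ^ 2 := (inv_injective h1).symm
    have h4 : 0 < √(1 - c * k' ^ 2) := Real.sqrt_pos.mpr (hsq k' hk')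
    simp only [g, h3] at h
    field_simp at h
    exact h
  have hder : ∀ k ∈ S, HasDerivWithinAt g (((1 - c * k ^ 2) * √(1 - c * k ^ 2))⁻¹) S k := by
    intro k hk
    have h0 := hsq k hk
    have h4 : 0 < √(1 - c * k ^ 2) := Real.sqrt_pos.mpr h0
    have h1 : HasDerivAt (fun k : ℝ => 1 - c * k ^ 2) (-(c * (2 * k))) k := by
      simpa using ((hasDerivAt_pow 2 k).const_mul c).const_sub 1
    have h2 := (hasDerivAt_id k).div (h1.sqrt h0.ne') h4.ne'
    refine (h2.congr_deriv ?_).hasDerivWithinAt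
    have h5 := Real.sq_sqrt h0.le
    simp only [id]
    rw [h5]
    field_simp
    rw [h5]
    ring
  rw [← himg, lintegral_image_eq_lintegral_abs_deriv_mul hSm hder hinj]
  refine setLIntegral_congr_fun hSm fun k hk => ?_
  have h0 := hsq k hk
  have h4 : 0 < √(1 - c * k ^ 2) := Real.sqrt_pos.mpr h0
  rw [← ENNReal.ofReal_mul (abs_nonneg _), abs_of_pos (by positivity), hden k hk, hg2 k hk]
  congr 1
  rw [inv_inv, ← mul_assoc]
  congr 1
  · field_simp
  · congr 2
    rw [div_mul_eq_mul_div, div_inv_eq_mul, div_mul_cancel₀ _ h0.ne']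

lemma hasDerivAt_neg_sqrt_div_sqrt {b u : ℝ} (hu : 0 < u) (hbu : b * u < 1) :
    HasDerivAt (fun u => -(√(1 - b * u) / √u)) ((2 * (u * √u) * √(1 - b * u))⁻¹) u := by
  have h0 : 0 < 1 - b * u := by linarith
  have h1 : HasDerivAt (fun u : ℝ => 1 - b * u) (-b) u := by
    simpa using ((hasDerivAt_id u).const_mul b).const_sub 1
  have hs : 0 < √u := Real.sqrt_pos.mpr hu
  have hs' : 0 < √(1 - b * u) := Real.sqrt_pos.mpr h0
  refine (((h1.sqrt h0.ne').div (hasDerivAt_sqrt hu.ne') hs.ne').neg).congr_deriv ?_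
  have h5 := Real.sq_sqrt h0.le
  have h6 := Real.sq_sqrt hu.le
  rw [h6]
  field_simp
  rw [h5, h6]
  ring

/-- Abel-type integral of the Pareto weight. -/
lemma lintegral_pareto_le {b r s : ℝ} (hr : 0 < r) (hrs : r ≤ s) (hbs : b * s ≤ 1) (hb : 0 ≤ b) :
    ∫⁻ u in Ioo r s, ENNReal.ofReal ((2 * (u * √u) * √(1 - b * u))⁻¹) =
      ENNReal.ofReal (√(1 - b * r) / √r - √(1 - b * s) / √s) := by
  have hlt : ∀ u ∈ Ioo r s, b * u < 1 := by
    intro u hu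
    rcases hb.eq_or_lt with rfl | hb
    · simp
    · exact lt_of_lt_of_le (by have := hu.2; gcongr) hbs
  have hcont : ContinuousOn (fun u => -(√(1 - b * u) / √u)) (Icc r s) := by
    refine ContinuousOn.neg (ContinuousOn.div (by fun_prop) (by fun_prop) fun u hu => ?_)
    exact (Real.sqrt_pos.mpr (hr.trans_le hu.1)).ne'
  have hd : ∀ u ∈ Ioo r s, HasDerivAt (fun u => -(√(1 - b * u) / √u))
      ((2 * (u * √u) * √(1 - b * u))⁻¹) u := fun u hu =>
    hasDerivAt_neg_sqrt_div_sqrt (hr.trans hu.1) (hlt u hu)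
  have hnn : ∀ u ∈ Ioo r s, 0 ≤ (2 * (u * √u) * √(1 - b * u))⁻¹ := fun u hu => by
    have := hr.trans hu.1; positivity
  have hInt := intervalIntegral.integrableOn_deriv_of_nonneg hcont hd hnn
  rw [← ofReal_integral_eq_lintegral_ofReal (hInt.mono_set Ioo_subset_Ioc_self)
    ((ae_restrict_iff' measurableSet_Ioo).2 (ae_of_all _ hnn)), ← integral_Ioc_eq_integral_Ioo,
    ← intervalIntegral.integral_of_le hrs,
    intervalIntegral.integral_eq_sub_of_hasDerivAt_of_le hrs hcont hd
      ((intervalIntegrable_iff_integrableOn_Ioc_of_le hrs).2 hInt)]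
  congr 1; ring

lemma lintegral_pareto_indicator_le {b h : ℝ} (hh : 0 < h) (hb : 0 ≤ b) :
    ∫⁻ u in Ioo (h ^ 2) 1, {u : ℝ | b * u < 1}.indicator
        (fun u => ENNReal.ofReal ((2 * (u * √u) * √(1 - b * u))⁻¹)) u ≤
      {x : ℝ | x < 1}.indicator (fun _ => ENNReal.ofReal h⁻¹) (b * h ^ 2) := by
  have hms : MeasurableSet {u : ℝ | b * u < 1} := measurableSet_lt (by fun_prop) measurable_const
  rw [lintegral_indicator hms, Measure.restrict_restrict hms]
  by_cases h1 : b * h ^ 2 < 1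
  · rw [indicator_of_mem (by exact h1)]
    obtain ⟨s, hs1, hs2, hs3⟩ : ∃ s, h ^ 2 ≤ s ∧ b * s ≤ 1 ∧
        ({u : ℝ | b * u < 1} ∩ Ioo (h ^ 2) 1) ⊆ Ioo (h ^ 2) s := by
      by_cases h2 : b ≤ 1
      · by_cases h3 : h ^ 2 ≤ 1
        · exact ⟨1, h3, by linarith, fun u hu => hu.2⟩
        · refine ⟨h ^ 2, le_rfl, h1.le, fun u hu => ?_⟩
          exact absurd (hu.2.1.trans hu.2.2) (by simpa using not_lt.2 (not_le.1 h3).le)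
      · have hb' : 0 < b := by linarith
        refine ⟨1 / b, ?_, by field_simp; rfl, fun u hu => ⟨hu.2.1, ?_⟩⟩
        · rw [le_div_iff₀ hb']; linarith
        · rw [lt_div_iff₀ hb']; linarith [hu.1.out]
    refine (lintegral_mono_set hs3).trans ?_
    rw [lintegral_pareto_le (by positivity) hs1 hs2 hb]
    refine ENNReal.ofReal_le_ofReal ?_
    rw [Real.sqrt_sq hh.le]
    have h5 : √(1 - b * h ^ 2) ≤ 1 := Real.sqrt_le_one.2 (by nlinarith [sq_nonneg h])
    have h6 : 0 ≤ √(1 - b * s) / √s := by positivity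
    calc _ ≤ √(1 - b * h ^ 2) / h := by linarith
      _ ≤ 1 / h := by gcongr
      _ = _ := one_div h
  · have : {u : ℝ | b * u < 1} ∩ Ioo (h ^ 2) 1 = ∅ := by
      ext u
      simp only [mem_inter_iff, mem_ofPred_eq, mem_Ioo, mem_empty_iff_false, iff_false]
      rintro ⟨h2, h3, -⟩
      exact h1 (lt_of_le_of_lt (by gcongr) h2)
    rw [this]; simp

section ParetoMixture

variable {V : Type*} [NormedAddCommGroup V] [InnerProductSpace ℝ V] [FiniteDimensional ℝ V]
  [MeasurableSpace V] [BorelSpace V]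

/-- The Pareto weight of the Gaussian mixture, a probability density on `(h², 1)`. -/
def paretoDensity (h u : ℝ) : ℝ := h / (1 - h) * (2 * (u * √u))⁻¹

/-- The Pareto mixture of centred Gaussian measures. -/
def paretoMixture (V : Type*) [NormedAddCommGroup V] [InnerProductSpace ℝ V]
    [FiniteDimensional ℝ V] [MeasurableSpace V] [BorelSpace V] (h : ℝ) : Measure V :=
  (volume : Measure V).withDensity fun ξ => ∫⁻ u in Ioo (h ^ 2) 1,
    ENNReal.ofReal (paretoDensity h u) * ENNReal.ofReal (gaussDensity V u ξ)

lemma measurable_gaussDensity_uncurry (W : Type*) [NormedAddCommGroup W] [InnerProductSpace ℝ W]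
    [MeasurableSpace W] [BorelSpace W] :
    Measurable (fun p : ℝ × W => ENNReal.ofReal (gaussDensity W p.1 p.2)) := by
  unfold gaussDensity; fun_prop

lemma measurable_paretoDensity (h : ℝ) :
    Measurable (fun u => ENNReal.ofReal (paretoDensity h u)) := by
  unfold paretoDensity; fun_prop

lemma lintegral_paretoMixture (h : ℝ) {F : V → ℝ≥0∞} (hF : Measurable F) :
    ∫⁻ ξ, F ξ ∂(paretoMixture V h) = ∫⁻ u in Ioo (h ^ 2) 1, ENNReal.ofReal (paretoDensity h u) *
      ∫⁻ ξ, ENNReal.ofReal (gaussDensity V u ξ) * F ξ := by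
  have hg := measurable_gaussDensity_uncurry V
  have hp := measurable_paretoDensity h
  unfold paretoMixture
  rw [lintegral_withDensity_eq_lintegral_mul _ _ hF]
  · have h1 : ∀ ξ : V, (fun ξ => ∫⁻ u in Ioo (h ^ 2) 1,
        ENNReal.ofReal (paretoDensity h u) * ENNReal.ofReal (gaussDensity V u ξ)) ξ * F ξ =
        ∫⁻ u in Ioo (h ^ 2) 1,
        ENNReal.ofReal (paretoDensity h u) * (ENNReal.ofReal (gaussDensity V u ξ) * F ξ) := by
      intro ξ
      simp only
      have hm : Measurable fun u => ENNReal.ofReal (paretoDensity h u) *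
          ENNReal.ofReal (gaussDensity V u ξ) := hp.mul (hg.comp measurable_prodMk_right)
      rw [← lintegral_mul_const _ hm]
      simp only [mul_assoc]
    simp only [Pi.mul_apply]
    rw [lintegral_congr h1, lintegral_lintegral_swap]
    · refine lintegral_congr fun u => ?_
      have hm : Measurable fun ξ => ENNReal.ofReal (gaussDensity V u ξ) * F ξ :=
        (hg.comp measurable_prodMk_left).mul hF
      rw [lintegral_const_mul _ hm]
    · refine Measurable.aemeasurable ?_
      exact (hp.comp measurable_snd).mul ((hg.comp measurable_swap).mul (hF.comp measurable_fst))
  · exact Measurable.lintegral_prod_right'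
      (f := fun p : V × ℝ => ENNReal.ofReal (paretoDensity h p.2) *
        ENNReal.ofReal (gaussDensity V p.2 p.1))
      ((hp.comp measurable_snd).mul (hg.comp measurable_swap))

lemma paretoDensity_nonneg {h u : ℝ} (hh : 0 < h) (hh1 : h < 1) (hu : h ^ 2 < u) :
    0 ≤ paretoDensity h u := by
  have : 0 < u := lt_trans (by positivity) hu
  have : 0 < 1 - h := by linarith
  unfold paretoDensity; positivity

lemma isProbabilityMeasure_paretoMixture {h : ℝ} (hh : 0 < h) (hh1 : h < 1) :
    IsProbabilityMeasure (paretoMixture V h) := by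
  constructor
  rw [← lintegral_one, lintegral_paretoMixture h measurable_const]
  have h1 : 0 < 1 - h := by linarith
  calc _ = ∫⁻ u in Ioo (h ^ 2) 1, ENNReal.ofReal (h / (1 - h)) *
        ENNReal.ofReal ((2 * (u * √u) * √(1 - 0 * u))⁻¹) := by
        refine setLIntegral_congr_fun measurableSet_Ioo fun u hu => ?_
        have hu0 : 0 < u := lt_trans (by positivity) hu.1
        simp only [mul_one, lintegral_gaussDensity hu0]
        rw [← ENNReal.ofReal_mul (by positivity)]
        simp [paretoDensity]
    _ = 1 := by
        rw [lintegral_const_mul _ (by fun_prop),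
          lintegral_pareto_le (by positivity) (by nlinarith) (by norm_num) le_rfl,
          ← ENNReal.ofReal_mul (by positivity), Real.sqrt_sq hh.le]
        simp only [zero_mul, sub_zero, Real.sqrt_one, ENNReal.ofReal_eq_one]
        field_simp

lemma lintegral_sq_norm_paretoMixture_le {h : ℝ} (hh : 0 < h) (hh1 : h < 1) :
    ∫⁻ ξ, ENNReal.ofReal (‖ξ‖ ^ 2) ∂(paretoMixture V h) ≤
      ENNReal.ofReal (2 * 2 ^ (Module.finrank ℝ V / 2 : ℝ) * h) := by
  have h1 : 0 < 1 - h := by linarith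
  set K : ℝ := 2 * 2 ^ (Module.finrank ℝ V / 2 : ℝ) with hK
  have hK0 : 0 < K := by positivity
  rw [lintegral_paretoMixture h (by fun_prop)]
  have hle : h ^ 2 ≤ 1 := by nlinarith
  have hd : ∀ u ∈ Ioo (h ^ 2) 1, HasDerivAt (fun u => √u) ((2 * √u)⁻¹) u := fun u hu => by
    simpa using hasDerivAt_sqrt (lt_trans (by positivity) hu.1 : 0 < u).ne'
  have hnn : ∀ u ∈ Ioo (h ^ 2) 1, 0 ≤ (2 * √u)⁻¹ := fun u hu => by positivity
  have hcont : ContinuousOn (fun u => √u) (Icc (h ^ 2) 1) := by fun_prop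
  have hInt := intervalIntegral.integrableOn_deriv_of_nonneg hcont hd hnn
  calc _ ≤ ∫⁻ u in Ioo (h ^ 2) 1, ENNReal.ofReal (h / (1 - h) * K) *
        ENNReal.ofReal ((2 * √u)⁻¹) := by
        refine setLIntegral_mono' measurableSet_Ioo fun u hu => ?_
        have hu0 : 0 < u := lt_trans (by positivity) hu.1
        refine (mul_le_mul_right (lintegral_sq_norm_mul_gaussDensity_le hu0) _).trans ?_
        rw [← ENNReal.ofReal_mul (paretoDensity_nonneg hh hh1 hu.1),
          ← ENNReal.ofReal_mul (by positivity)]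
        refine le_of_eq ?_
        congr 1
        unfold paretoDensity
        have : √u ≠ 0 := by positivity
        rw [← hK]
        field_simp
    _ = _ := by
        rw [lintegral_const_mul _ (by fun_prop),
          ← ofReal_integral_eq_lintegral_ofReal (hInt.mono_set Ioo_subset_Ioc_self)
          ((ae_restrict_iff' measurableSet_Ioo).2 (ae_of_all _ hnn)),
          ← integral_Ioc_eq_integral_Ioo, ← intervalIntegral.integral_of_le hle,
          intervalIntegral.integral_eq_sub_of_hasDerivAt_of_le hle hcont hd
          ((intervalIntegrable_iff_integrableOn_Ioc_of_le hle).2 hInt),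
          ← ENNReal.ofReal_mul (by positivity), Real.sqrt_sq hh.le, Real.sqrt_one]
        congr 1
        field_simp

/-- The potential of the Pareto mixture is, up to normalisation, a truncation of the Gaussian
representation of the Newtonian kernel. -/
lemma lintegral_inv_enorm_paretoMixture_le (hV : 2 ≤ Module.finrank ℝ V) {h : ℝ} (hh : 0 < h)
    (hh1 : h < 1) (f : ℝ) (y : V) :
    ∫⁻ ξ, ‖y + f • ξ‖ₑ⁻¹ ∂(paretoMixture V h) ≤
      ENNReal.ofReal (1 - h)⁻¹ * ∫⁻ k in {k : ℝ | 0 < k ∧ f ^ 2 * k ^ 2 * h ^ 2 < 1},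
        ENNReal.ofReal (2 / √π * exp (-(k ^ 2 * ‖y‖ ^ 2))) := by
  have h1 : 0 < 1 - h := by linarith
  have hpi : 0 < √π := by positivity
  have hgauss : ∀ u ∈ Ioo (h ^ 2) 1, ∫⁻ ξ, ENNReal.ofReal (gaussDensity V u ξ) * ‖y + f • ξ‖ₑ⁻¹ ≤
      ∫⁻ k in Ioi (0 : ℝ), {u : ℝ | (f ^ 2 * k ^ 2) * u < 1}.indicator (fun u =>
        ENNReal.ofReal (2 / √π * exp (-(k ^ 2 * ‖y‖ ^ 2))) *
          ENNReal.ofReal ((√(1 - f ^ 2 * k ^ 2 * u))⁻¹)) u := by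
    intro u hu
    have hu0 : 0 < u := lt_trans (by positivity) hu.1
    have hc : 0 ≤ f ^ 2 * u := by positivity
    calc _ = ∫⁻ ξ, ∫⁻ l in Ioi (0 : ℝ), ENNReal.ofReal (2 / √π) *
            (ENNReal.ofReal (gaussDensity V u ξ) *
              ENNReal.ofReal (exp (-(l ^ 2 * ‖y + f • ξ‖ ^ 2)))) := by
          refine lintegral_congr fun ξ => ?_
          rw [← lintegral_gaussian_Ioi_eq_inv_enorm, ← lintegral_const_mul _ (by fun_prop)]
          refine lintegral_congr fun l => ?_
          rw [ENNReal.ofReal_mul (by positivity)]; ring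
      _ = ∫⁻ l in Ioi (0 : ℝ), ∫⁻ ξ, ENNReal.ofReal (2 / √π) *
            (ENNReal.ofReal (gaussDensity V u ξ) *
              ENNReal.ofReal (exp (-(l ^ 2 * ‖y + f • ξ‖ ^ 2)))) := by
          rw [lintegral_lintegral_swap]
          refine Measurable.aemeasurable ?_
          simp only [Function.uncurry_def]
          unfold gaussDensity
          fun_prop
      _ ≤ ∫⁻ l in Ioi (0 : ℝ), ENNReal.ofReal (2 / √π) * ENNReal.ofReal
            ((1 + f ^ 2 * u * l ^ 2)⁻¹ * exp (-(l ^ 2 * ‖y‖ ^ 2 / (1 + f ^ 2 * u * l ^ 2)))) := by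
          refine lintegral_mono fun l => ?_
          rw [lintegral_const_mul _ (by unfold gaussDensity; fun_prop),
            lintegral_gaussDensity_mul_exp hu0]
          refine mul_le_mul_right (ENNReal.ofReal_le_ofReal ?_) _
          rw [show l ^ 2 * f ^ 2 * u = f ^ 2 * u * l ^ 2 by ring]
          refine mul_le_mul_of_nonneg_right ?_ (exp_pos _).le
          rw [← rpow_neg_one (1 + f ^ 2 * u * l ^ 2)]
          refine rpow_le_rpow_of_exponent_le (by nlinarith [mul_nonneg hc (sq_nonneg l)]) ?_
          have : (2 : ℝ) ≤ Module.finrank ℝ V := by exact_mod_cast hV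
          linarith
      _ = ∫⁻ k in {k : ℝ | 0 < k ∧ f ^ 2 * u * k ^ 2 < 1}, ENNReal.ofReal (2 / √π) *
            ENNReal.ofReal ((√(1 - f ^ 2 * u * k ^ 2))⁻¹ * exp (-(k ^ 2 * ‖y‖ ^ 2))) := by
          rw [lintegral_const_mul _ (by fun_prop), lintegral_Ioi_gaussian_rescale hc,
            lintegral_const_mul _ (by fun_prop)]
      _ = _ := by
          have hset : {k : ℝ | 0 < k ∧ f ^ 2 * u * k ^ 2 < 1} =
              {k : ℝ | f ^ 2 * u * k ^ 2 < 1} ∩ Ioi 0 := by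
            ext k; simp [and_comm]
          have hms : MeasurableSet {k : ℝ | f ^ 2 * u * k ^ 2 < 1} :=
            measurableSet_lt (by fun_prop) measurable_const
          rw [hset, ← Measure.restrict_restrict hms, ← lintegral_indicator hms]
          refine lintegral_congr fun k => ?_
          simp only [indicator, mem_ofPred_eq]
          rw [show f ^ 2 * k ^ 2 * u = f ^ 2 * u * k ^ 2 by ring]
          split_ifs
          · rw [← ENNReal.ofReal_mul (by positivity), ← ENNReal.ofReal_mul (by positivity)]
            congr 1; ring
          · rfl
  have hmeasI : Measurable (fun p : ℝ × ℝ => {u : ℝ | (f ^ 2 * p.1 ^ 2) * u < 1}.indicator (fun u =>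
        ENNReal.ofReal (2 / √π * exp (-(p.1 ^ 2 * ‖y‖ ^ 2))) *
          ENNReal.ofReal ((√(1 - f ^ 2 * p.1 ^ 2 * u))⁻¹)) p.2) := by
    simp only [indicator, mem_ofPred_eq]
    exact Measurable.ite (measurableSet_lt (by fun_prop) measurable_const) (by fun_prop)
      measurable_const
  have hp := measurable_paretoDensity h
  rw [lintegral_paretoMixture h (by fun_prop)]
  calc _ ≤ ∫⁻ u in Ioo (h ^ 2) 1, ∫⁻ k in Ioi (0 : ℝ), ENNReal.ofReal (paretoDensity h u) *
        {u : ℝ | (f ^ 2 * k ^ 2) * u < 1}.indicator (fun u =>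
        ENNReal.ofReal (2 / √π * exp (-(k ^ 2 * ‖y‖ ^ 2))) *
          ENNReal.ofReal ((√(1 - f ^ 2 * k ^ 2 * u))⁻¹)) u := by
        refine setLIntegral_mono' measurableSet_Ioo fun u hu => ?_
        rw [lintegral_const_mul' _ _ ENNReal.ofReal_ne_top]
        exact mul_le_mul_right (hgauss u hu) _
    _ = ∫⁻ k in Ioi (0 : ℝ), ∫⁻ u in Ioo (h ^ 2) 1, ENNReal.ofReal (paretoDensity h u) *
        {u : ℝ | (f ^ 2 * k ^ 2) * u < 1}.indicator (fun u =>
        ENNReal.ofReal (2 / √π * exp (-(k ^ 2 * ‖y‖ ^ 2))) *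
          ENNReal.ofReal ((√(1 - f ^ 2 * k ^ 2 * u))⁻¹)) u := by
        rw [lintegral_lintegral_swap]
        exact ((hp.comp measurable_fst).mul (hmeasI.comp measurable_swap)).aemeasurable
    _ ≤ ∫⁻ k in Ioi (0 : ℝ), {k : ℝ | f ^ 2 * k ^ 2 * h ^ 2 < 1}.indicator (fun k =>
          ENNReal.ofReal (1 - h)⁻¹ * ENNReal.ofReal (2 / √π * exp (-(k ^ 2 * ‖y‖ ^ 2)))) k := by
        refine lintegral_mono fun k => ?_
        have hmk : Measurable ({u : ℝ | f ^ 2 * k ^ 2 * u < 1}.indicator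
            (fun u => ENNReal.ofReal ((2 * (u * √u) * √(1 - f ^ 2 * k ^ 2 * u))⁻¹))) :=
          Measurable.indicator (by fun_prop) (measurableSet_lt (by fun_prop) measurable_const)
        calc _ = ∫⁻ u in Ioo (h ^ 2) 1, (ENNReal.ofReal (h / (1 - h)) *
              ENNReal.ofReal (2 / √π * exp (-(k ^ 2 * ‖y‖ ^ 2)))) *
              {u : ℝ | f ^ 2 * k ^ 2 * u < 1}.indicator
              (fun u => ENNReal.ofReal ((2 * (u * √u) * √(1 - f ^ 2 * k ^ 2 * u))⁻¹)) u := by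
              refine setLIntegral_congr_fun measurableSet_Ioo fun u hu => ?_
              have hu0 : 0 < u := lt_trans (by positivity) hu.1
              simp only [indicator]
              split_ifs
              · unfold paretoDensity
                rw [← ENNReal.ofReal_mul (by positivity), ← ENNReal.ofReal_mul (by positivity),
                  ← ENNReal.ofReal_mul (by positivity), ← ENNReal.ofReal_mul (by positivity),
                  mul_inv (2 * (u * √u))]
                congr 1; ring
              · simp
          _ ≤ _ := by
              rw [lintegral_const_mul _ hmk]
              refine (mul_le_mul_right (lintegral_pareto_indicator_le hh (by positivity)) _).trans ?_
              simp only [indicator, mem_ofPred_eq]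
              split_ifs
              · rw [← ENNReal.ofReal_mul (by positivity), ← ENNReal.ofReal_mul (by positivity),
                  ← ENNReal.ofReal_mul (by positivity)]
                refine le_of_eq ?_
                congr 1; field_simp
              · simp
    _ = _ := by
        have hms : MeasurableSet {k : ℝ | f ^ 2 * k ^ 2 * h ^ 2 < 1} :=
          measurableSet_lt (by fun_prop) measurable_const
        rw [lintegral_indicator hms, Measure.restrict_restrict hms,
          lintegral_const_mul _ (by fun_prop)]
        congr 3
        ext k; simp [and_comm]

/-- Averaging over the Pareto mixture increases the Newtonian kernel by a factor at most
`1 + 2 h`. -/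
lemma lintegral_inv_enorm_paretoMixture_le_mul (hV : 2 ≤ Module.finrank ℝ V) {h : ℝ} (hh : 0 < h)
    (hh1 : h ≤ 1 / 2) (f : ℝ) (y : V) :
    ∫⁻ ξ, ‖y + f • ξ‖ₑ⁻¹ ∂(paretoMixture V h) ≤ ENNReal.ofReal (1 + 2 * h) * ‖y‖ₑ⁻¹ := by
  refine (lintegral_inv_enorm_paretoMixture_le hV hh (by linarith) f y).trans ?_
  refine mul_le_mul' (ENNReal.ofReal_le_ofReal ?_) ?_
  · rw [inv_le_iff_one_le_mul₀ (by linarith)]; nlinarith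
  · rw [← lintegral_gaussian_Ioi_eq_inv_enorm]
    exact lintegral_mono_set fun k hk => hk.1

/-- The averaged kernel is bounded at the scale `h`. -/
lemma lintegral_inv_enorm_paretoMixture_le_const (hV : 2 ≤ Module.finrank ℝ V) {h : ℝ} (hh : 0 < h)
    (hh1 : h ≤ 1 / 2) {f : ℝ} (hf : 1 / 2 ≤ |f|) (y : V) :
    ∫⁻ ξ, ‖y + f • ξ‖ₑ⁻¹ ∂(paretoMixture V h) ≤ ENNReal.ofReal (5 / h) := by
  refine (lintegral_inv_enorm_paretoMixture_le hV hh (by linarith) f y).trans ?_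
  have hpi : 1.7 ≤ √π := by
    rw [Real.le_sqrt (by norm_num) pi_pos.le]; nlinarith [pi_gt_three]
  have hset : {k : ℝ | 0 < k ∧ f ^ 2 * k ^ 2 * h ^ 2 < 1} ⊆ Ioo 0 (2 / h) := by
    rintro k ⟨hk, hk2⟩
    refine ⟨hk, ?_⟩
    rw [lt_div_iff₀ hh]
    by_contra hcon
    have h1 : 1 ≤ |f| * (k * h) := by nlinarith [not_lt.1 hcon]
    have h2 : f ^ 2 * k ^ 2 * h ^ 2 = (|f| * (k * h)) ^ 2 := by
      rw [mul_pow, sq_abs]; ring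
    nlinarith
  calc _ ≤ ENNReal.ofReal 2 * ∫⁻ k in Ioo 0 (2 / h), ENNReal.ofReal (2 / 1.7) := by
        refine mul_le_mul' (ENNReal.ofReal_le_ofReal ?_) ?_
        · rw [inv_le_iff_one_le_mul₀ (by linarith)]; nlinarith
        · refine (lintegral_mono_set hset).trans (lintegral_mono fun k => ?_)
          refine ENNReal.ofReal_le_ofReal ?_
          have h1 : exp (-(k ^ 2 * ‖y‖ ^ 2)) ≤ 1 := exp_le_one_iff.2 (by
            have : 0 ≤ k ^ 2 * ‖y‖ ^ 2 := by positivity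
            linarith)
          calc _ ≤ 2 / √π * 1 := by gcongr
            _ ≤ 2 / 1.7 := by rw [mul_one]; gcongr
    _ ≤ _ := by
        rw [setLIntegral_const, Real.volume_Ioo, ← ENNReal.ofReal_mul (by norm_num),
          ← ENNReal.ofReal_mul (by norm_num)]
        refine ENNReal.ofReal_le_ofReal ?_
        rw [sub_zero, show (2 : ℝ) * (2 / 1.7 * (2 / h)) = (8 / 1.7) / h by ring]
        gcongr; norm_num

end ParetoMixture

/-- Pigeonhole over scales: a curve with bounded energy that starts close to the origin is small
compared with the square root of the elapsed time at some scale. -/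
lemma exists_scale_norm_le {V : Type*} [NormedAddCommGroup V] {η K : ℝ} (hη : 0 < η) (hK : 0 ≤ K)
    (n : ℕ) : ∀ τ > 0, ∃ ε > 0, ∀ (r : ℝ → V) (G : ℝ → ℝ) (t₀ : ℝ),
      (∀ s t, t₀ ≤ s → s ≤ t → t ≤ t₀ + τ → ‖r t - r s‖ ^ 2 ≤ (t - s) * (G t - G s)) →
      Monotone G → G (t₀ + τ) - G t₀ ≤ K → G (t₀ + τ) - G t₀ ≤ n * (η ^ 2 / 4) → ‖r t₀‖ ≤ ε →
      ∃ s, 0 < s ∧ s ≤ τ ∧ ∀ t ∈ Icc t₀ (t₀ + s), ‖r t‖ ≤ η * √s := by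
  induction n with
  | zero =>
    intro τ hτ
    refine ⟨η * √τ, by positivity, fun r G t₀ hr hG _ hn h0 => ⟨τ, hτ, le_rfl, fun t ht => ?_⟩⟩
    have h1 := hr t₀ t le_rfl ht.1 ht.2
    have h2 : G t - G t₀ ≤ 0 := by
      have := hG ht.2
      simp only [CharP.cast_eq_zero, zero_mul] at hn
      linarith
    have h3 : ‖r t - r t₀‖ ^ 2 ≤ 0 := h1.trans (mul_nonpos_of_nonneg_of_nonpos (by linarith [ht.1]) h2)
    have h4 : r t - r t₀ = 0 := by
      rw [← norm_eq_zero]; nlinarith [norm_nonneg (r t - r t₀)]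
    rw [sub_eq_zero.1 h4]; exact h0
  | succ n ih =>
    intro τ hτ
    set A : ℝ := 16 * K / η ^ 2 + 1 with hA
    have hA1 : 1 ≤ A := by rw [hA]; linarith [show 0 ≤ 16 * K / η ^ 2 by positivity]
    have hA0 : 0 < A := by linarith
    obtain ⟨ε, hε, H⟩ := ih (τ / A) (by positivity)
    refine ⟨min ε (η / 4 * √τ), by positivity, fun r G t₀ hr hG hK' hn h0 => ?_⟩
    have hτA : τ / A ≤ τ := div_le_self hτ.le hA1
    have hτA0 : 0 < τ / A := by positivity
    have hm1 : G (t₀ + τ / A) ≤ G (t₀ + τ) := hG (by linarith)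
    have hm2 : G t₀ ≤ G (t₀ + τ / A) := hG (by linarith)
    by_cases hc : G (t₀ + τ) - G (t₀ + τ / A) ≤ η ^ 2 / 4
    · refine ⟨τ, hτ, le_rfl, ?_⟩
      have hfirst : ∀ t ∈ Icc t₀ (t₀ + τ / A), ‖r t - r t₀‖ ≤ η / 4 * √τ := by
        intro t ht
        have h1 := hr t₀ t le_rfl ht.1 (by linarith [ht.2])
        refine abs_le_of_sq_le_sq' ?_ (by positivity) |>.2
        have h3 : G t - G t₀ ≤ K := by have := hG (show t ≤ t₀ + τ by linarith [ht.2]); linarith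
        have h4 : 0 ≤ G t - G t₀ := by have := hG ht.1; linarith
        calc _ ≤ (t - t₀) * (G t - G t₀) := h1
          _ ≤ τ / A * K := by gcongr; linarith [ht.2]
          _ ≤ _ := by
            rw [mul_pow, Real.sq_sqrt hτ.le, div_mul_eq_mul_div, div_le_iff₀ hA0, hA]
            have : (η / 4) ^ 2 * τ * (16 * K / η ^ 2 + 1) = τ * K + (η / 4) ^ 2 * τ := by
              field_simp; ring
            rw [this]
            have : 0 ≤ (η / 4) ^ 2 * τ := by positivity
            linarith
      intro t ht
      have h0' : ‖r t₀‖ ≤ η / 4 * √τ := h0.trans (min_le_right _ _)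
      rcases le_total t (t₀ + τ / A) with htA | htA
      · have := norm_le_norm_add_norm_sub' (r t) (r t₀)
        have h2 := hfirst t ⟨ht.1, htA⟩
        have : 0 ≤ η * √τ := by positivity
        linarith
      · have h1 := norm_le_norm_add_norm_sub' (r t) (r (t₀ + τ / A))
        have h2 := norm_le_norm_add_norm_sub' (r (t₀ + τ / A)) (r t₀)
        have h3 := hfirst (t₀ + τ / A) ⟨by linarith, le_rfl⟩
        have h4 : ‖r t - r (t₀ + τ / A)‖ ≤ η / 2 * √τ := by
          refine abs_le_of_sq_le_sq' ?_ (by positivity) |>.2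
          have h5 : G t ≤ G (t₀ + τ) := hG ht.2
          have h6 : 0 ≤ G t - G (t₀ + τ / A) := by have := hG htA; linarith
          calc _ ≤ (t - (t₀ + τ / A)) * (G t - G (t₀ + τ / A)) := hr _ _ (by linarith) htA ht.2
            _ ≤ τ * (η ^ 2 / 4) := by
                gcongr
                · linarith [ht.2]
                · linarith
            _ = _ := by rw [mul_pow, Real.sq_sqrt hτ.le]; ring
        linarith
    · obtain ⟨s, hs0, hs, h⟩ := H r G t₀ (fun s t h1 h2 h3 => hr s t h1 h2 (by linarith)) hG
        (by linarith) (by push_cast at hn; linarith) (h0.trans (min_le_left _ _))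
      exact ⟨s, hs0, hs.trans hτA, h⟩

/-- The Cauchy–Schwarz inequality on an interval. -/
lemma sq_norm_integral_Ioc_le {V : Type*} [NormedAddCommGroup V] [NormedSpace ℝ V] {s t : ℝ}
    (hst : s ≤ t) {v : ℝ → V} (hv : IntegrableOn v (Ioc s t))
    (hv2 : IntegrableOn (fun x => ‖v x‖ ^ 2) (Ioc s t)) :
    ‖∫ x in Ioc s t, v x‖ ^ 2 ≤ (t - s) * ∫ x in Ioc s t, ‖v x‖ ^ 2 := by
  rcases hst.eq_or_lt with rfl | hlt
  · simp
  set I := ∫ x in Ioc s t, ‖v x‖ with hI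
  have h1 : ‖∫ x in Ioc s t, v x‖ ≤ I := norm_integral_le_integral_norm _
  have hL : 0 < t - s := by linarith
  have h2 : 0 ≤ ∫ x in Ioc s t, (‖v x‖ - I / (t - s)) ^ 2 := integral_nonneg fun x => sq_nonneg _
  have h3 : ∫ x in Ioc s t, (‖v x‖ - I / (t - s)) ^ 2 =
      (∫ x in Ioc s t, ‖v x‖ ^ 2) - 2 * (I / (t - s)) * I + (I / (t - s)) ^ 2 * (t - s) := by
    have h4 : ∀ x, (‖v x‖ - I / (t - s)) ^ 2 =
        (‖v x‖ ^ 2 - 2 * (I / (t - s)) * ‖v x‖) + (I / (t - s)) ^ 2 := fun x => by ring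
    simp only [h4]
    have hA : IntegrableOn (fun x => ‖v x‖ ^ 2 - 2 * (I / (t - s)) * ‖v x‖) (Ioc s t) :=
      hv2.sub (hv.norm.const_mul _)
    have hc : IntegrableOn (fun _ : ℝ => (I / (t - s)) ^ 2) (Ioc s t) :=
      integrableOn_const (by simp)
    rw [integral_add hA hc, integral_sub hv2 (hv.norm.const_mul _), integral_const_mul, ← hI]
    simp [Measure.real, hL.le, mul_comm]
  rw [h3] at h2
  have h5 : I ^ 2 ≤ (t - s) * ∫ x in Ioc s t, ‖v x‖ ^ 2 := by
    have : 0 ≤ (t - s) * ((∫ x in Ioc s t, ‖v x‖ ^ 2) - 2 * (I / (t - s)) * I +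
      (I / (t - s)) ^ 2 * (t - s)) := by positivity
    have h6 : (t - s) * ((∫ x in Ioc s t, ‖v x‖ ^ 2) - 2 * (I / (t - s)) * I +
      (I / (t - s)) ^ 2 * (t - s)) = (t - s) * (∫ x in Ioc s t, ‖v x‖ ^ 2) - I ^ 2 := by
      field_simp; ring
    linarith
  exact (pow_le_pow_left₀ (norm_nonneg _) h1 2).trans h5

lemma timeSet_top (t₀ : ℝ) : timeSet t₀ ⊤ = Ioi t₀ := by
  ext t; simp [timeSet]

lemma mnorm_sq {m : Fin N → ℝ} (hm : ∀ i, 0 < m i) (x : Conf d N) :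
    mnorm m x ^ 2 = ∑ i, m i * ‖x i‖ ^ 2 := by
  unfold mnorm minner
  simp only [real_inner_self_eq_norm_sq]
  exact Real.sq_sqrt (Finset.sum_nonneg fun i _ => mul_nonneg (hm i).le (sq_nonneg _))

lemma mnorm_nonneg (m : Fin N → ℝ) (x : Conf d N) : 0 ≤ mnorm m x := Real.sqrt_nonneg _

lemma mul_sq_norm_le_mnorm_sq {m : Fin N → ℝ} (hm : ∀ i, 0 < m i) {μ : ℝ} (hμm : ∀ i, μ ≤ m i)
    (x : Conf d N) (i : Fin N) : μ * ‖x i‖ ^ 2 ≤ mnorm m x ^ 2 := by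
  rw [mnorm_sq hm]
  calc μ * ‖x i‖ ^ 2 ≤ m i * ‖x i‖ ^ 2 := by gcongr; exact hμm i
    _ ≤ _ := Finset.single_le_sum (f := fun i => m i * ‖x i‖ ^ 2)
        (fun j _ => mul_nonneg (hm j).le (sq_nonneg _)) (Finset.mem_univ i)

lemma mul_add_sq_norm_le_mnorm_sq {m : Fin N → ℝ} (hm : ∀ i, 0 < m i) {μ : ℝ} (hμm : ∀ i, μ ≤ m i)
    (x : Conf d N) {i j : Fin N} (hij : i ≠ j) :
    μ * (‖x i‖ ^ 2 + ‖x j‖ ^ 2) ≤ mnorm m x ^ 2 := by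
  rw [mnorm_sq hm]
  calc _ ≤ m i * ‖x i‖ ^ 2 + m j * ‖x j‖ ^ 2 := by
        rw [mul_add]
        gcongr
        · exact hμm i
        · exact hμm j
    _ = ∑ k ∈ {i, j}, m k * ‖x k‖ ^ 2 := by rw [Finset.sum_pair hij]
    _ ≤ _ := Finset.sum_le_sum_of_subset_of_nonneg (Finset.subset_univ _)
        fun k _ _ => mul_nonneg (hm k).le (sq_nonneg _)

/-- A configuration with well-separated particles `i`, `j` is far from those colliding there. -/
lemma le_mnorm_sub_of_collision {m : Fin N → ℝ} (hm : ∀ i, 0 < m i) {μ ε : ℝ} (hμ : 0 < μ)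
    (hμm : ∀ i, μ ≤ m i) (hε : 0 < ε) {x y : Conf d N} (hx : ∀ i j, i ≠ j → ε ≤ ‖x i - x j‖)
    (hy : collision y) : √(μ / 2) * ε ≤ mnorm m (x - y) := by
  obtain ⟨i, j, hij, hyij⟩ := hy
  refine abs_le_of_sq_le_sq' ?_ (mnorm_nonneg _ _) |>.2
  have h1 := mul_add_sq_norm_le_mnorm_sq hm hμm (x - y) hij
  have h2 : ‖x i - x j‖ ≤ ‖(x - y) i‖ + ‖(x - y) j‖ := by
    have : x i - x j = (x - y) i - (x - y) j := by simp [hyij]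
    rw [this]; exact norm_sub_le _ _
  have h3 := (hx i j hij).trans h2
  have h4 : ε ^ 2 ≤ 2 * (‖(x - y) i‖ ^ 2 + ‖(x - y) j‖ ^ 2) := by
    nlinarith [sq_nonneg (‖(x - y) i‖ - ‖(x - y) j‖)]
  rw [mul_pow, Real.sq_sqrt (by positivity)]
  nlinarith

lemma exists_pos_le_mass (hN : 2 ≤ N) {m : Fin N → ℝ} (hm : ∀ i, 0 < m i) :
    ∃ μ > 0, ∀ i, μ ≤ m i := by
  have : Nonempty (Fin N) := ⟨⟨0, by omega⟩⟩
  obtain ⟨i, hi⟩ := Finite.exists_min m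
  exact ⟨m i, hm i, hi⟩

section Curves

variable {m : Fin N → ℝ} {φ φ' : ℝ → Conf d N}

lemma InD.integrableOn_Ioc (h : InD m 1 ⊤ φ φ') {s t : ℝ} (hs : 1 ≤ s) :
    IntegrableOn φ' (Ioc s t) := by
  rcases le_total 1 t with ht | ht
  · exact (h.2.2.2.1 t ht (EReal.coe_lt_top t)).mono_set (Ioc_subset_Ioc_left hs)
  · rw [Ioc_eq_empty (by linarith [hs.trans' ht])]; simp

lemma InD.integrableOn_sq (h : InD m 1 ⊤ φ φ') :
    IntegrableOn (fun t => mnorm m (φ' t) ^ 2) (Ioi 1) := by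
  have := h.2.2.2.2
  rwa [timeSet_top] at this

lemma InD.sub_eq_integral (h : InD m 1 ⊤ φ φ') {s t : ℝ} (hs : 1 ≤ s) (hst : s ≤ t) :
    φ t - φ s = ∫ x in Ioc s t, φ' x := by
  rw [h.2.2.1 t (hs.trans hst) (EReal.coe_lt_top t), h.2.2.1 s hs (EReal.coe_lt_top s),
    ← Ioc_union_Ioc_eq_Ioc hs hst,
    setIntegral_union (Ioc_disjoint_Ioc_of_le le_rfl) measurableSet_Ioc
      (h.integrableOn_Ioc le_rfl) (h.integrableOn_Ioc hs)]
  simp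

lemma InD.continuousOn (h : InD m 1 ⊤ φ φ') : ContinuousOn φ (Ici 1) := by
  have h1 : ∀ T : ℝ, 1 ≤ T → ContinuousOn φ (Icc 1 T) := fun T hT => by
    have h2 := intervalIntegral.continuousOn_primitive (f := φ') (a := 1) (b := T)
      (μ := volume) (by
        rw [integrableOn_Icc_iff_integrableOn_Ioc]; exact h.integrableOn_Ioc le_rfl)
    exact h2.congr fun t ht => h.2.2.1 t ht.1 (EReal.coe_lt_top t)
  intro t ht
  have := h1 (t + 1) (by linarith [ht.out]) t ⟨ht, by linarith⟩
  refine this.mono_of_mem_nhdsWithin ?_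
  refine mem_nhdsWithin.2 ⟨Iio (t + 1), isOpen_Iio, by simp, fun x hx => ⟨hx.2, hx.1.out.le⟩⟩

/-- The relative velocity of particles `i` and `j` along `hypCurve`. -/
def relVel (a : Conf d N) (φ' : ℝ → Conf d N) (i j : Fin N) (t : ℝ) : EuclideanSpace ℝ (Fin d) :=
  φ' t i - φ' t j + (a i - a j)

lemma InD.integrableOn_apply (h : InD m 1 ⊤ φ φ') {s t : ℝ} (hs : 1 ≤ s) (i : Fin N) :
    IntegrableOn (fun x => φ' x i) (Ioc s t) :=
  Integrable.eval (h.integrableOn_Ioc hs) i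

lemma InD.apply_sub_eq_integral (h : InD m 1 ⊤ φ φ') {s t : ℝ} (hs : 1 ≤ s) (hst : s ≤ t)
    (i : Fin N) : φ t i - φ s i = ∫ x in Ioc s t, φ' x i := by
  rw [← eval_integral (fun i => h.integrableOn_apply hs i), ← h.sub_eq_integral hs hst]
  rfl

lemma InD.integrableOn_relVel (h : InD m 1 ⊤ φ φ') (a : Conf d N) {s t : ℝ} (hs : 1 ≤ s)
    (i j : Fin N) : IntegrableOn (relVel a φ' i j) (Ioc s t) :=
  ((h.integrableOn_apply hs i).sub (h.integrableOn_apply hs j)).add (by simp)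

lemma InD.hypCurve_sub_eq_integral (h : InD m 1 ⊤ φ φ') (a x : Conf d N) {s t : ℝ} (hs : 1 ≤ s)
    (hst : s ≤ t) (i j : Fin N) :
    (hypCurve a x φ t i - hypCurve a x φ t j) - (hypCurve a x φ s i - hypCurve a x φ s j) =
      ∫ y in Ioc s t, relVel a φ' i j y := by
  unfold relVel
  have hA : IntegrableOn (fun y => φ' y i - φ' y j) (Ioc s t) :=
    (h.integrableOn_apply hs i).sub (h.integrableOn_apply hs j)
  have hc : IntegrableOn (fun _ : ℝ => a i - a j) (Ioc s t) := integrableOn_const (by simp)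
  rw [integral_add hA hc, integral_sub (h.integrableOn_apply hs i) (h.integrableOn_apply hs j),
    ← h.apply_sub_eq_integral hs hst, ← h.apply_sub_eq_integral hs hst]
  simp only [hypCurve, Pi.add_apply, Pi.sub_apply, Pi.smul_apply, setIntegral_const, Measure.real,
    Real.volume_Ioc, ENNReal.toReal_ofReal (sub_nonneg.2 hst)]
  module

lemma sq_norm_relVel_le (hm : ∀ i, 0 < m i) {μ : ℝ} (hμ : 0 < μ) (hμm : ∀ i, μ ≤ m i)
    (a : Conf d N) {i j : Fin N} (hij : i ≠ j) (t : ℝ) :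
    ‖relVel a φ' i j t‖ ^ 2 ≤ 4 / μ * mnorm m (φ' t) ^ 2 + 2 * ‖a i - a j‖ ^ 2 := by
  have h1 := mul_add_sq_norm_le_mnorm_sq hm hμm (φ' t) hij
  have h2 : ‖relVel a φ' i j t‖ ≤ ‖φ' t i‖ + ‖φ' t j‖ + ‖a i - a j‖ :=
    (norm_add_le _ _).trans (by gcongr; exact norm_sub_le _ _)
  have h3 : ‖φ' t i‖ ^ 2 + ‖φ' t j‖ ^ 2 ≤ mnorm m (φ' t) ^ 2 / μ := by
    rw [le_div_iff₀ hμ]; linarith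
  have h4 : ‖relVel a φ' i j t‖ ^ 2 ≤ (‖φ' t i‖ + ‖φ' t j‖ + ‖a i - a j‖) ^ 2 :=
    pow_le_pow_left₀ (norm_nonneg _) h2 2
  have h5 : 4 / μ * mnorm m (φ' t) ^ 2 = 4 * (mnorm m (φ' t) ^ 2 / μ) := by ring
  nlinarith [sq_nonneg (‖φ' t i‖ - ‖φ' t j‖), sq_nonneg (‖φ' t i‖ + ‖φ' t j‖ - ‖a i - a j‖)]

lemma InD.integrableOn_sq_relVel (h : InD m 1 ⊤ φ φ') (hm : ∀ i, 0 < m i) {μ : ℝ} (hμ : 0 < μ)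
    (hμm : ∀ i, μ ≤ m i) (a : Conf d N) {s t : ℝ} (hs : 1 ≤ s) {i j : Fin N} (hij : i ≠ j) :
    IntegrableOn (fun x => ‖relVel a φ' i j x‖ ^ 2) (Ioc s t) := by
  have h1 : IntegrableOn (fun x => mnorm m (φ' x) ^ 2) (Ioc s t) :=
    h.integrableOn_sq.mono_set fun x hx => lt_of_le_of_lt hs hx.1
  refine Integrable.mono' ((h1.const_mul (4 / μ)).add
    (integrableOn_const (C := 2 * ‖a i - a j‖ ^ 2) (by simp)))
    ((h.integrableOn_relVel a hs i j).aestronglyMeasurable.norm.pow 2) (ae_of_all _ fun x => ?_)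
  rw [norm_of_nonneg (sq_nonneg _)]
  exact sq_norm_relVel_le hm hμ hμm a hij x

lemma InD.integral_sq_relVel_le (h : InD m 1 ⊤ φ φ') (hm : ∀ i, 0 < m i) {μ E : ℝ} (hμ : 0 < μ)
    (hμm : ∀ i, μ ≤ m i) (hE : ∫ t in Ioi 1, mnorm m (φ' t) ^ 2 ≤ E) (a : Conf d N) {s t : ℝ}
    (hs : 1 ≤ s) (hst : s ≤ t) {i j : Fin N} (hij : i ≠ j) :
    ∫ x in Ioc s t, ‖relVel a φ' i j x‖ ^ 2 ≤ 4 / μ * E + 2 * ‖a i - a j‖ ^ 2 * (t - s) := by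
  have hsub : Ioc s t ⊆ Ioi 1 := fun x hx => lt_of_le_of_lt hs hx.1
  have h1 : IntegrableOn (fun x => mnorm m (φ' x) ^ 2) (Ioc s t) :=
    h.integrableOn_sq.mono_set hsub
  have hc : IntegrableOn (fun _ : ℝ => 2 * ‖a i - a j‖ ^ 2) (Ioc s t) := by
    exact integrableOn_const (by simp)
  calc _ ≤ ∫ x in Ioc s t, (4 / μ * mnorm m (φ' x) ^ 2 + 2 * ‖a i - a j‖ ^ 2) :=
        integral_mono (h.integrableOn_sq_relVel hm hμ hμm a hs hij)
          ((h1.const_mul _).add hc) fun x => sq_norm_relVel_le hm hμ hμm a hij x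
    _ = 4 / μ * (∫ x in Ioc s t, mnorm m (φ' x) ^ 2) + 2 * ‖a i - a j‖ ^ 2 * (t - s) := by
        rw [integral_add (h1.const_mul _) hc, integral_const_mul]
        simp [Measure.real, hst, mul_comm]
    _ ≤ _ := by
        gcongr
        exact (setIntegral_mono_set h.integrableOn_sq (ae_of_all _ fun x => sq_nonneg _)
          hsub.eventuallyLE).trans hE

lemma InD.sq_norm_apply_le (h : InD m 1 ⊤ φ φ') (hm : ∀ i, 0 < m i) {μ : ℝ} (hμ : 0 < μ)
    (hμm : ∀ i, μ ≤ m i) {t : ℝ} (ht : 1 ≤ t) (i : Fin N) :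
    ‖φ t i‖ ^ 2 ≤ (t - 1) * ((∫ t in Ioi 1, mnorm m (φ' t) ^ 2) / μ) := by
  have h0 : φ t i = ∫ x in Ioc 1 t, φ' x i := by
    rw [← h.apply_sub_eq_integral le_rfl ht, h.1]; simp
  have h1 : IntegrableOn (fun x => mnorm m (φ' x) ^ 2) (Ioc 1 t) :=
    h.integrableOn_sq.mono_set Ioc_subset_Ioi_self
  have hb : ∀ x, ‖φ' x i‖ ^ 2 ≤ mnorm m (φ' x) ^ 2 / μ := fun x => by
    rw [le_div_iff₀ hμ]; linarith [mul_sq_norm_le_mnorm_sq hm hμm (φ' x) i]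
  have h2 : IntegrableOn (fun x => ‖φ' x i‖ ^ 2) (Ioc 1 t) := by
    refine Integrable.mono' (h1.div_const μ)
      ((h.integrableOn_apply le_rfl i).aestronglyMeasurable.norm.pow 2) (ae_of_all _ fun x => ?_)
    rw [norm_of_nonneg (sq_nonneg _)]
    exact hb x
  rw [h0]
  refine (sq_norm_integral_Ioc_le ht (h.integrableOn_apply le_rfl i) h2).trans ?_
  refine mul_le_mul_of_nonneg_left ?_ (by linarith)
  calc _ ≤ ∫ x in Ioc 1 t, mnorm m (φ' x) ^ 2 / μ := integral_mono h2 (h1.div_const μ) hb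
    _ = (∫ x in Ioc 1 t, mnorm m (φ' x) ^ 2) / μ := integral_div _ _
    _ ≤ _ := by
        gcongr
        · exact ae_of_all _ fun x => sq_nonneg _
        · exact h.integrableOn_sq
        · exact Ioc_subset_Ioi_self

end Curves

/-- The Newtonian potential with values in `[0, ∞]`, infinite exactly at collisions. -/
def potE (m : Fin N → ℝ) (x : Conf d N) : ℝ≥0∞ :=
  ∑ i : Fin N, ∑ j : Fin N, if i < j then ENNReal.ofReal (m i * m j) * ‖x i - x j‖ₑ⁻¹ else 0

lemma measurable_potE (m : Fin N → ℝ) : Measurable (potE m : Conf d N → ℝ≥0∞) := by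
  refine Finset.measurable_sum _ fun i _ => Finset.measurable_sum _ fun j _ => ?_
  split_ifs
  · exact Measurable.const_mul (by fun_prop) _
  · exact measurable_const

lemma U_nonneg {m : Fin N → ℝ} (hm : ∀ i, 0 < m i) (x : Conf d N) : 0 ≤ U m x := by
  refine Finset.sum_nonneg fun i _ => Finset.sum_nonneg fun j _ => ?_
  have := hm i
  have := hm j
  split_ifs <;> positivity

lemma potE_eq_ofReal {m : Fin N → ℝ} (hm : ∀ i, 0 < m i) {x : Conf d N} (hx : ¬ collision x) :
    potE m x = ENNReal.ofReal (U m x) := by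
  have h0 : ∀ i j : Fin N, 0 ≤ if i < j then m i * m j / ‖x i - x j‖ else 0 := fun i j => by
    have := hm i
    have := hm j
    split_ifs <;> positivity
  unfold potE U
  rw [ENNReal.ofReal_sum_of_nonneg fun i _ => Finset.sum_nonneg fun j _ => h0 i j]
  refine Finset.sum_congr rfl fun i _ => ?_
  rw [ENNReal.ofReal_sum_of_nonneg fun j _ => h0 i j]
  refine Finset.sum_congr rfl fun j _ => ?_
  split_ifs with hij
  · have hne : 0 < ‖x i - x j‖ :=
      norm_pos_iff.2 (sub_ne_zero.2 fun h => hx ⟨i, j, hij.ne, h⟩)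
    rw [div_eq_mul_inv, ENNReal.ofReal_mul (mul_pos (hm i) (hm j)).le, ENNReal.ofReal_inv_of_pos hne,
      ofReal_norm]
  · simp

lemma not_collision_of_potE_ne_top {m : Fin N → ℝ} (hm : ∀ i, 0 < m i) {x : Conf d N}
    (hx : potE m x ≠ ⊤) : ¬ collision x := by
  have key : ∀ i j : Fin N, i < j → x i ≠ x j := fun i j hij h => hx <| by
    refine ENNReal.sum_eq_top.2 ⟨i, Finset.mem_univ _, ENNReal.sum_eq_top.2
      ⟨j, Finset.mem_univ _, ?_⟩⟩
    rw [if_pos hij, h]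
    simp [ENNReal.mul_top, mul_pos (hm i) (hm j)]
  rintro ⟨i, j, hij, h⟩
  rcases lt_or_gt_of_ne hij with hlt | hlt
  · exact key i j hlt h
  · exact key j i hlt h.symm

lemma integrableOn_U_of_lintegral_potE {m : Fin N → ℝ} (hm : ∀ i, 0 < m i) {γ : ℝ → Conf d N}
    {I : Set ℝ} (hγ : AEMeasurable γ (volume.restrict I))
    (h : ∫⁻ t in I, potE m (γ t) ≠ ⊤) :
    (∀ᵐ t ∂volume.restrict I, ¬ collision (γ t)) ∧ IntegrableOn (fun t => U m (γ t)) I := by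
  have hmeas : AEMeasurable (fun t => potE m (γ t)) (volume.restrict I) :=
    (measurable_potE m).comp_aemeasurable hγ
  have h1 : ∀ᵐ t ∂volume.restrict I, ¬ collision (γ t) := by
    filter_upwards [ae_lt_top' hmeas h] with t ht
    exact not_collision_of_potE_ne_top hm ht.ne
  refine ⟨h1, (integrable_toReal_of_lintegral_ne_top hmeas h).congr ?_⟩
  filter_upwards [h1] with t ht
  rw [potE_eq_ofReal hm ht, ENNReal.toReal_ofReal (U_nonneg hm _)]

lemma lintegral_potE_eq {m : Fin N → ℝ} (hm : ∀ i, 0 < m i) {γ : ℝ → Conf d N} {I : Set ℝ}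
    (h1 : ∀ᵐ t ∂volume.restrict I, ¬ collision (γ t)) (h2 : IntegrableOn (fun t => U m (γ t)) I) :
    ∫⁻ t in I, potE m (γ t) = ENNReal.ofReal (∫ t in I, U m (γ t)) := by
  rw [ofReal_integral_eq_lintegral_ofReal h2 (ae_of_all _ fun t => U_nonneg hm _)]
  refine lintegral_congr_ae ?_
  filter_upwards [h1] with t ht
  exact potE_eq_ofReal hm ht

/-- The tent function of height one centred at `t₀` with half-width `τ`. -/
def tent (t₀ τ t : ℝ) : ℝ := (max 0 (min t t₀ - (t₀ - τ)) - max 0 (min t (t₀ + τ) - t₀)) / τ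

/-- The slope of `tent`. -/
def tentSlope (t₀ τ t : ℝ) : ℝ :=
  ((Ioc (t₀ - τ) t₀).indicator 1 t - (Ioc t₀ (t₀ + τ)).indicator 1 t) / τ

lemma continuous_tent (t₀ τ : ℝ) : Continuous (tent t₀ τ) := by
  unfold tent; fun_prop

lemma tent_of_le {t₀ τ t : ℝ} (hτ : 0 < τ) (ht : t ≤ t₀ - τ) : tent t₀ τ t = 0 := by
  unfold tent
  rw [min_eq_left (by linarith), min_eq_left (by linarith), max_eq_left (by linarith),
    max_eq_left (by linarith)]
  simp

lemma tent_of_ge {t₀ τ t : ℝ} (hτ : 0 < τ) (ht : t₀ + τ ≤ t) : tent t₀ τ t = 0 := by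
  unfold tent
  rw [min_eq_right (by linarith), min_eq_right (by linarith), max_eq_right (by linarith),
    max_eq_right (by linarith)]
  simp

lemma half_le_tent {t₀ τ t : ℝ} (hτ : 0 < τ) (ht : t₀ ≤ t) (ht' : t ≤ t₀ + τ / 2) :
    1 / 2 ≤ tent t₀ τ t := by
  unfold tent
  rw [min_eq_right ht, min_eq_left (by linarith), max_eq_right (by linarith),
    max_eq_right (by linarith), le_div_iff₀ hτ]
  linarith

lemma tentSlope_of_notMem {t₀ τ t : ℝ} (ht : t ∉ Ioc (t₀ - τ) (t₀ + τ)) (hτ : 0 < τ) :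
    tentSlope t₀ τ t = 0 := by
  unfold tentSlope
  rw [indicator_of_notMem, indicator_of_notMem]
  · simp
  · exact fun h => ht ⟨by linarith [h.1], h.2⟩
  · exact fun h => ht ⟨h.1, by linarith [h.2]⟩

lemma tentSlope_sq {t₀ τ t : ℝ} (ht : t ∈ Ioc (t₀ - τ) (t₀ + τ)) :
    tentSlope t₀ τ t ^ 2 = (1 / τ) ^ 2 := by
  unfold tentSlope
  by_cases h : t ≤ t₀
  · rw [indicator_of_mem (show t ∈ Ioc (t₀ - τ) t₀ from ⟨ht.1, h⟩), indicator_of_notMem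
      fun h' => absurd h'.1 (not_lt.2 h)]
    simp
  · rw [indicator_of_notMem fun h' => h h'.2,
      indicator_of_mem (show t ∈ Ioc t₀ (t₀ + τ) from ⟨not_le.1 h, ht.2⟩)]
    simp [neg_div]

lemma measurable_tentSlope (t₀ τ : ℝ) : Measurable (tentSlope t₀ τ) := by
  unfold tentSlope
  exact ((measurable_one.indicator measurableSet_Ioc).sub
    (measurable_one.indicator measurableSet_Ioc)).div_const _

lemma abs_tentSlope_le {t₀ τ t : ℝ} (hτ : 0 < τ) : |tentSlope t₀ τ t| ≤ 1 / τ := by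
  by_cases ht : t ∈ Ioc (t₀ - τ) (t₀ + τ)
  · exact (sq_eq_sq_iff_abs_eq_abs _ _ |>.1 (tentSlope_sq ht)).le.trans
      (abs_of_nonneg (by positivity)).le
  · rw [tentSlope_of_notMem ht hτ, abs_zero]; positivity

lemma integrableOn_tentSlope {t₀ τ : ℝ} (hτ : 0 < τ) (s t : ℝ) :
    IntegrableOn (tentSlope t₀ τ) (Ioc s t) :=
  Integrable.mono' (integrableOn_const (C := 1 / τ) (by simp))
    (measurable_tentSlope t₀ τ).aestronglyMeasurable (ae_of_all _ fun _ => abs_tentSlope_le hτ)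

lemma setIntegral_indicator_one_Ioc {s t b c : ℝ} (hs : s ≤ b) :
    ∫ x in Ioc s t, (Ioc b c).indicator (1 : ℝ → ℝ) x = max 0 (min t c - b) := by
  rw [setIntegral_indicator measurableSet_Ioc, Ioc_inter_Ioc, sup_eq_right.2 hs]
  simp [Measure.real, max_comm, ENNReal.toReal_ofReal']

lemma integral_tentSlope {t₀ τ : ℝ} (hτ : 0 < τ) (h1 : 1 ≤ t₀ - τ) (t : ℝ) :
    ∫ s in Ioc 1 t, tentSlope t₀ τ s = tent t₀ τ t := by
  unfold tentSlope tent
  have hi : ∀ b c : ℝ, IntegrableOn (fun x => (Ioc b c).indicator (1 : ℝ → ℝ) x) (Ioc 1 t) :=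
    fun b c => (integrableOn_const (C := (1 : ℝ)) (by simp)).indicator measurableSet_Ioc
  rw [integral_div, integral_sub (hi _ _) (hi _ _), setIntegral_indicator_one_Ioc h1,
    setIntegral_indicator_one_Ioc (by linarith)]

lemma U_smul (m : Fin N → ℝ) (a : Conf d N) {t : ℝ} (ht : 0 < t) : U m (t • a) = t⁻¹ * U m a := by
  unfold U
  simp only [Finset.mul_sum]
  refine Finset.sum_congr rfl fun i _ => Finset.sum_congr rfl fun j _ => ?_
  split_ifs
  · rw [Pi.smul_apply, Pi.smul_apply, ← smul_sub, norm_smul, norm_of_nonneg ht.le, mul_comm t,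
      div_mul_eq_div_div, div_eq_inv_mul]
  · simp

lemma mnorm_add_smul_sq {m : Fin N → ℝ} (hm : ∀ i, 0 < m i) (v w : Conf d N) (g : ℝ) :
    mnorm m (v + g • w) ^ 2 = mnorm m v ^ 2 + 2 * g * minner m v w + g ^ 2 * mnorm m w ^ 2 := by
  rw [mnorm_sq hm, mnorm_sq hm, mnorm_sq hm, minner]
  simp only [Finset.mul_sum, ← Finset.sum_add_distrib]
  refine Finset.sum_congr rfl fun i _ => ?_
  rw [Pi.add_apply, Pi.smul_apply, norm_add_sq_real, inner_smul_right, norm_smul, mul_pow,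
    Real.norm_eq_abs, sq_abs]
  ring

lemma mnorm_add_smul_sq_le {m : Fin N → ℝ} (hm : ∀ i, 0 < m i) (v w : Conf d N) (g : ℝ) :
    mnorm m (v + g • w) ^ 2 ≤ 2 * mnorm m v ^ 2 + 2 * (g ^ 2 * mnorm m w ^ 2) := by
  have h1 := mnorm_add_smul_sq hm v w g
  have h2 := mnorm_add_smul_sq hm v w (-g)
  have := sq_nonneg (mnorm m (v + (-g) • w))
  nlinarith

lemma continuous_mnorm (m : Fin N → ℝ) : Continuous (mnorm m : Conf d N → ℝ) := by
  unfold mnorm minner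
  fun_prop

lemma InD.aestronglyMeasurable {m : Fin N → ℝ} {φ φ' : ℝ → Conf d N} (h : InD m 1 ⊤ φ φ') :
    AEStronglyMeasurable φ' (volume.restrict (Ioi 1)) := by
  have : Ioi (1 : ℝ) = ⋃ n : ℕ, Ioc 1 (n : ℝ) := by
    ext t
    simp only [mem_Ioi, mem_iUnion, mem_Ioc]
    exact ⟨fun ht => ⟨⌈t⌉₊, ht, Nat.le_ceil t⟩, fun ⟨_, ht⟩ => ht.1⟩
  rw [this]
  exact AEStronglyMeasurable.iUnion fun n => (h.integrableOn_Ioc le_rfl).aestronglyMeasurable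

lemma InD.add_tent {m : Fin N → ℝ} (hm : ∀ i, 0 < m i) {φ φ' : ℝ → Conf d N}
    (h : InD m 1 ⊤ φ φ') {w : Conf d N} (hw : inX m w) {t₀ τ : ℝ} (hτ : 0 < τ)
    (h1 : 1 ≤ t₀ - τ) :
    InD m 1 ⊤ (fun t => φ t + tent t₀ τ t • w) (fun t => φ' t + tentSlope t₀ τ t • w) := by
  have hg : ∀ t : ℝ, IntegrableOn (fun s => tentSlope t₀ τ s • w) (Ioc 1 t) := fun t =>
    (integrableOn_tentSlope hτ 1 t).smul_const w
  refine ⟨?_, fun t ht _ => ?_, fun t ht _ => ?_, fun t _ _ => ?_, ?_⟩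
  · simp only [h.1, tent_of_le hτ h1, zero_smul, add_zero]
  · have h2 := h.2.1 t ht (EReal.coe_lt_top t)
    unfold inX at h2 hw ⊢
    simp only [Pi.add_apply, Pi.smul_apply, smul_add, Finset.sum_add_distrib, h2, zero_add]
    simp only [smul_comm (m _) (tent t₀ τ t), ← Finset.smul_sum, hw, smul_zero]
  · rw [integral_add (h.integrableOn_Ioc le_rfl) (hg t), ← h.2.2.1 t ht (EReal.coe_lt_top t),
      integral_smul_const, integral_tentSlope hτ h1]
  · exact (h.integrableOn_Ioc le_rfl).add (hg t)
  · rw [timeSet_top]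
    have hsq : IntegrableOn (fun t => tentSlope t₀ τ t ^ 2 * mnorm m w ^ 2) (Ioi 1) := by
      refine Integrable.mul_const ?_ _
      have hI : IntegrableOn (fun t => tentSlope t₀ τ t ^ 2) (Ioc (t₀ - τ) (t₀ + τ)) :=
        (integrableOn_const (C := (1 / τ) ^ 2) (by simp)).congr_fun
          (fun t ht => (tentSlope_sq ht).symm) measurableSet_Ioc
      refine hI.of_forall_sdiff_eq_zero measurableSet_Ioi fun t ht => ?_
      rw [tentSlope_of_notMem ht.2 hτ]; simp
    refine Integrable.mono' ((h.integrableOn_sq.const_mul 2).add (hsq.const_mul 2)) ?_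
      (ae_of_all _ fun t => ?_)
    · refine ((continuous_mnorm m).comp_aestronglyMeasurable (h.aestronglyMeasurable.add ?_)).pow 2
      exact ((measurable_tentSlope t₀ τ).smul_const w).aestronglyMeasurable
    · rw [norm_of_nonneg (sq_nonneg _)]
      exact mnorm_add_smul_sq_le hm _ _ _

lemma hypCurve_add (a x : Conf d N) (φ ψ : ℝ → Conf d N) (t : ℝ) :
    hypCurve a x (fun t => φ t + ψ t) t = hypCurve a x φ t + ψ t := by
  unfold hypCurve; module

lemma hypAction_ne_top {m : Fin N → ℝ} {a x : Conf d N} {φ φ' : ℝ → Conf d N}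
    (h : hypAction m a x ⊤ φ φ' ≠ ⊤) :
    IntegrableOn (hypIntegrand m a x φ φ') (Ioi 1) ∧
      (∀ᵐ t ∂volume.restrict (Ioi 1), ¬ collision (hypCurve a x φ t)) ∧
      hypAction m a x ⊤ φ φ' = ((∫ t in Ioi 1, hypIntegrand m a x φ φ' t : ℝ) : EReal) := by
  unfold hypAction at h ⊢
  rw [timeSet_top] at h ⊢
  by_cases hc : IntegrableOn (hypIntegrand m a x φ φ') (Ioi 1) ∧
      (∀ᵐ t ∂volume.restrict (Ioi 1), ¬ collision (hypCurve a x φ t))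
  · exact ⟨hc.1, hc.2, if_pos hc⟩
  · exact absurd (if_neg hc) h

lemma hypInf_le_integral {m : Fin N → ℝ} {a x : Conf d N} {φ φ' : ℝ → Conf d N}
    (h : InD m 1 ⊤ φ φ') (h1 : IntegrableOn (hypIntegrand m a x φ φ') (Ioi 1))
    (h2 : ∀ᵐ t ∂volume.restrict (Ioi 1), ¬ collision (hypCurve a x φ t)) :
    hypInf m a x ⊤ ≤ ((∫ t in Ioi 1, hypIntegrand m a x φ φ' t : ℝ) : EReal) := by
  have h3 : hypAction m a x ⊤ φ φ' = ((∫ t in Ioi 1, hypIntegrand m a x φ φ' t : ℝ) : EReal) := by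
    unfold hypAction
    rw [timeSet_top]
    exact if_pos ⟨h1, h2⟩
  rw [← h3]
  exact iInf_le_of_le φ (iInf_le_of_le φ' (iInf_le_of_le h le_rfl))

lemma InD.continuousOn_hypCurve {m : Fin N → ℝ} {φ φ' : ℝ → Conf d N} (h : InD m 1 ⊤ φ φ')
    (a x : Conf d N) : ContinuousOn (hypCurve a x φ) (Ici 1) := by
  unfold hypCurve
  exact ((h.continuousOn.add (by fun_prop)).add continuousOn_const).sub continuousOn_const

lemma integrableOn_U_sub {m : Fin N → ℝ} {a x : Conf d N} {φ φ' : ℝ → Conf d N}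
    (h : InD m 1 ⊤ φ φ') (h1 : IntegrableOn (hypIntegrand m a x φ φ') (Ioi 1)) :
    IntegrableOn (fun t => U m (hypCurve a x φ t) - U m (t • a)) (Ioi 1) := by
  refine (h1.sub (h.integrableOn_sq.div_const 2)).congr (ae_of_all _ fun t => ?_)
  simp only [hypIntegrand, Pi.sub_apply]
  ring

lemma integrableOn_U_hypCurve {m : Fin N → ℝ} {a x : Conf d N} {φ φ' : ℝ → Conf d N}
    (h : InD m 1 ⊤ φ φ') (h1 : IntegrableOn (hypIntegrand m a x φ φ') (Ioi 1)) {s t : ℝ}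
    (hs : 1 ≤ s) : IntegrableOn (fun t => U m (hypCurve a x φ t)) (Ioc s t) := by
  have hsub : Ioc s t ⊆ Ioi 1 := fun x hx => lt_of_le_of_lt hs hx.1
  have h2 : IntegrableOn (fun t : ℝ => U m (t • a)) (Ioc s t) := by
    have hc : ContinuousOn (fun t : ℝ => t⁻¹ * U m a) (Icc s t) :=
      (continuousOn_inv₀.mono fun y hy => ne_of_gt (by linarith [hy.1])).mul continuousOn_const
    refine (hc.integrableOn_Icc.mono_set Ioc_subset_Icc_self).congr_fun (fun y hy => ?_)
      measurableSet_Ioc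
    exact (U_smul m a (by linarith [hy.1])).symm
  refine ((integrableOn_U_sub h h1).mono_set hsub |>.add h2).congr (ae_of_all _ fun y => ?_)
  simp

/-- Comparison of a minimizer with a tent perturbation of finite potential energy. -/
lemma integral_hypIntegrand_le_add_tent {m : Fin N → ℝ} (hm : ∀ i, 0 < m i) {a x : Conf d N}
    {φ φ' : ℝ → Conf d N} (h : InD m 1 ⊤ φ φ')
    (hmin : hypAction m a x ⊤ φ φ' = hypInf m a x ⊤) (hfin : hypInf m a x ⊤ ≠ ⊤) {w : Conf d N}
    (hw : inX m w) {t₀ τ : ℝ} (hτ : 0 < τ) (h1 : 1 ≤ t₀ - τ)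
    (hpot : ∫⁻ t in Ioc (t₀ - τ) (t₀ + τ), potE m (hypCurve a x φ t + tent t₀ τ t • w) ≠ ⊤) :
    (∀ᵐ t ∂volume.restrict (Ioc (t₀ - τ) (t₀ + τ)),
      ¬ collision (hypCurve a x φ t + tent t₀ τ t • w)) ∧
    IntegrableOn (fun t => U m (hypCurve a x φ t + tent t₀ τ t • w)) (Ioc (t₀ - τ) (t₀ + τ)) ∧
    IntegrableOn (hypIntegrand m a x (fun t => φ t + tent t₀ τ t • w)
      (fun t => φ' t + tentSlope t₀ τ t • w)) (Ioi 1) ∧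
    ∫ t in Ioi 1, hypIntegrand m a x φ φ' t ≤ ∫ t in Ioi 1,
      hypIntegrand m a x (fun t => φ t + tent t₀ τ t • w)
        (fun t => φ' t + tentSlope t₀ τ t • w) t := by
  obtain ⟨hF, hcol, hA⟩ := hypAction_ne_top (hmin ▸ hfin)
  have hsub : Ioc (t₀ - τ) (t₀ + τ) ⊆ Ioi 1 := fun x hx => lt_of_le_of_lt h1 hx.1
  have hmeas : AEMeasurable (fun t => hypCurve a x φ t + tent t₀ τ t • w)
      (volume.restrict (Ioc (t₀ - τ) (t₀ + τ))) := by
    refine AEMeasurable.add ?_ ((continuous_tent t₀ τ).smul continuous_const).aemeasurable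
    exact ((h.continuousOn_hypCurve a x).mono
      (hsub.trans Ioi_subset_Ici_self)).aemeasurable measurableSet_Ioc
  obtain ⟨hc, hU⟩ := integrableOn_U_of_lintegral_potE hm hmeas hpot
  have hout : ∀ t, t ∉ Ioc (t₀ - τ) (t₀ + τ) → tent t₀ τ t = 0 := fun t ht => by
    by_cases h' : t ≤ t₀ - τ
    · exact tent_of_le hτ h'
    · exact tent_of_ge hτ (le_of_lt (not_le.1 fun h'' => ht ⟨not_le.1 h', h''⟩))
  have hD := h.add_tent hm hw hτ h1
  have hInt : IntegrableOn (hypIntegrand m a x (fun t => φ t + tent t₀ τ t • w)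
      (fun t => φ' t + tentSlope t₀ τ t • w)) (Ioi 1) := by
    have hdiff : IntegrableOn (fun t => U m (hypCurve a x φ t + tent t₀ τ t • w) -
        U m (hypCurve a x φ t)) (Ioi 1) := by
      refine IntegrableOn.of_forall_sdiff_eq_zero
        (hU.sub (integrableOn_U_hypCurve h hF h1)) measurableSet_Ioi fun t ht => ?_
      simp [hout t ht.2]
    refine (((hD.integrableOn_sq.div_const 2).add hdiff).add (integrableOn_U_sub h hF)).congr
      (ae_of_all _ fun t => ?_)
    simp only [hypIntegrand, Pi.add_apply, hypCurve_add]
    ring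
  have hcol' : ∀ᵐ t ∂volume.restrict (Ioi 1),
      ¬ collision (hypCurve a x (fun t => φ t + tent t₀ τ t • w) t) := by
    rw [ae_restrict_iff' measurableSet_Ioi] at hcol ⊢
    rw [ae_restrict_iff' measurableSet_Ioc] at hc
    filter_upwards [hcol, hc] with t ht1 ht2 ht
    rw [hypCurve_add]
    by_cases hI : t ∈ Ioc (t₀ - τ) (t₀ + τ)
    · exact ht2 hI
    · simpa [hout t hI] using ht1 ht
  refine ⟨hc, hU, hInt, ?_⟩
  have := hypInf_le_integral hD hInt hcol'
  rw [← hmin, hA] at this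
  exact_mod_cast this

/-- Second-order minimality: symmetric tent perturbations in the direction `w` cannot decrease
the total potential by more than the kinetic cost. -/
lemma two_mul_lintegral_potE_le {m : Fin N → ℝ} (hm : ∀ i, 0 < m i) {a x : Conf d N}
    {φ φ' : ℝ → Conf d N} (h : InD m 1 ⊤ φ φ')
    (hmin : hypAction m a x ⊤ φ φ' = hypInf m a x ⊤) (hfin : hypInf m a x ⊤ ≠ ⊤) {w : Conf d N}
    (hw : inX m w) {t₀ τ : ℝ} (hτ : 0 < τ) (h1 : 1 ≤ t₀ - τ) :
    2 * ∫⁻ t in Ioc (t₀ - τ) (t₀ + τ), potE m (hypCurve a x φ t) ≤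
      (∫⁻ t in Ioc (t₀ - τ) (t₀ + τ), potE m (hypCurve a x φ t + tent t₀ τ t • w)) +
      (∫⁻ t in Ioc (t₀ - τ) (t₀ + τ), potE m (hypCurve a x φ t + tent t₀ τ t • -w)) +
      ENNReal.ofReal (2 / τ * mnorm m w ^ 2) := by
  by_cases hp : ∫⁻ t in Ioc (t₀ - τ) (t₀ + τ), potE m (hypCurve a x φ t + tent t₀ τ t • w) = ⊤
  · simp [hp]
  by_cases hq : ∫⁻ t in Ioc (t₀ - τ) (t₀ + τ), potE m (hypCurve a x φ t + tent t₀ τ t • -w) = ⊤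
  · rw [hq]; simp
  have hw' : inX m (-w) := by
    unfold inX at hw ⊢
    simp [hw]
  obtain ⟨hF, hcol, -⟩ := hypAction_ne_top (hmin ▸ hfin)
  have hsub : Ioc (t₀ - τ) (t₀ + τ) ⊆ Ioi 1 := fun x hx => lt_of_le_of_lt h1 hx.1
  obtain ⟨hcp, hUp, hip, hlep⟩ := integral_hypIntegrand_le_add_tent hm h hmin hfin hw hτ h1 hp
  obtain ⟨hcq, hUq, hiq, hleq⟩ := integral_hypIntegrand_le_add_tent hm h hmin hfin hw' hτ h1 hq
  have hU := integrableOn_U_hypCurve h hF (t := t₀ + τ) h1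
  rw [lintegral_potE_eq hm (ae_restrict_of_ae_restrict_of_subset hsub hcol) hU,
    lintegral_potE_eq hm hcp hUp, lintegral_potE_eq hm hcq hUq]
  have hpos : ∀ γ : ℝ → Conf d N, 0 ≤ ∫ t in Ioc (t₀ - τ) (t₀ + τ), U m (γ t) := fun γ =>
    integral_nonneg fun t => U_nonneg hm _
  have hnn : 0 ≤ 2 / τ * mnorm m w ^ 2 := by positivity
  rw [← ENNReal.ofReal_add (hpos _) (hpos _), ← ENNReal.ofReal_add (add_nonneg (hpos _) (hpos _))
    hnn, two_mul, ← ENNReal.ofReal_add (hpos _) (hpos _)]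
  refine ENNReal.ofReal_le_ofReal ?_
  set F := hypIntegrand m a x φ φ'
  set P := hypIntegrand m a x (fun t => φ t + tent t₀ τ t • w)
    (fun t => φ' t + tentSlope t₀ τ t • w) with hP
  set Q := hypIntegrand m a x (fun t => φ t + tent t₀ τ t • -w)
    (fun t => φ' t + tentSlope t₀ τ t • -w) with hQ
  have hPF : IntegrableOn (fun t => P t - F t) (Ioi 1) := hip.sub hF
  have hQF : IntegrableOn (fun t => Q t - F t) (Ioi 1) := hiq.sub hF
  have h0 : 0 ≤ ∫ t in Ioi 1, ((P t - F t) + (Q t - F t)) := by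
    rw [integral_add hPF hQF, integral_sub hip hF, integral_sub hiq hF]
    linarith
  have hpt : ∀ t, (P t - F t) + (Q t - F t) = tentSlope t₀ τ t ^ 2 * mnorm m w ^ 2 +
      U m (hypCurve a x φ t + tent t₀ τ t • w) + U m (hypCurve a x φ t + tent t₀ τ t • -w) -
      2 * U m (hypCurve a x φ t) := fun t => by
    have e1 := mnorm_add_smul_sq hm (φ' t) w (tentSlope t₀ τ t)
    have e2 := mnorm_add_smul_sq hm (φ' t) w (-tentSlope t₀ τ t)
    rw [neg_smul, ← smul_neg] at e2
    simp only [hP, hQ, F, hypIntegrand, hypCurve_add, e1, e2]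
    ring
  have hzero : ∀ t ∈ Ioi (1 : ℝ) \ Ioc (t₀ - τ) (t₀ + τ), (P t - F t) + (Q t - F t) = 0 := by
    intro t ht
    have htent : tent t₀ τ t = 0 := by
      by_cases h' : t ≤ t₀ - τ
      · exact tent_of_le hτ h'
      · exact tent_of_ge hτ (le_of_lt (not_le.1 fun h'' => ht.2 ⟨not_le.1 h', h''⟩))
    rw [hpt, tentSlope_of_notMem ht.2 hτ, htent]
    simp only [zero_smul, add_zero]
    ring
  rw [setIntegral_eq_of_subset_of_forall_sdiff_eq_zero measurableSet_Ioi hsub hzero] at h0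
  have hcst : IntegrableOn (fun _ : ℝ => (1 / τ) ^ 2 * mnorm m w ^ 2) (Ioc (t₀ - τ) (t₀ + τ)) :=
    integrableOn_const (by simp)
  have hs1 : IntegrableOn (fun t => (1 / τ) ^ 2 * mnorm m w ^ 2 +
      U m (hypCurve a x φ t + tent t₀ τ t • w)) (Ioc (t₀ - τ) (t₀ + τ)) := hcst.add hUp
  have hs2 : IntegrableOn (fun t => (1 / τ) ^ 2 * mnorm m w ^ 2 +
      U m (hypCurve a x φ t + tent t₀ τ t • w) + U m (hypCurve a x φ t + tent t₀ τ t • -w))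
      (Ioc (t₀ - τ) (t₀ + τ)) := hs1.add hUq
  have heq : ∫ t in Ioc (t₀ - τ) (t₀ + τ), ((P t - F t) + (Q t - F t)) =
      2 / τ * mnorm m w ^ 2 +
      (∫ t in Ioc (t₀ - τ) (t₀ + τ), U m (hypCurve a x φ t + tent t₀ τ t • w)) +
      (∫ t in Ioc (t₀ - τ) (t₀ + τ), U m (hypCurve a x φ t + tent t₀ τ t • -w)) -
      2 * ∫ t in Ioc (t₀ - τ) (t₀ + τ), U m (hypCurve a x φ t) := by
    rw [setIntegral_congr_fun measurableSet_Ioc (g := fun t => (1 / τ) ^ 2 * mnorm m w ^ 2 +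
      U m (hypCurve a x φ t + tent t₀ τ t • w) + U m (hypCurve a x φ t + tent t₀ τ t • -w) -
      2 * U m (hypCurve a x φ t)) (fun t ht => by simp only [hpt, tentSlope_sq ht]),
      integral_sub hs2 (hU.const_mul 2), integral_add hs1 hUq, integral_add hcst hUp,
      integral_const_mul (2 : ℝ)]
    congr 3
    rw [setIntegral_const, Measure.real, Real.volume_Ioc, ENNReal.toReal_ofReal (by linarith),
      smul_eq_mul]
    field_simp
    ring
  rw [heq] at h0
  linarith

/-- The configuration whose particles all lie on the line through `ξ`, with coefficients `c`. -/
def lineConf (c : Fin N → ℝ) (ξ : EuclideanSpace ℝ (Fin d)) : Conf d N := fun k => c k • ξ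

lemma inX_lineConf {m c : Fin N → ℝ} (hc : ∑ k, m k * c k = 0) (ξ : EuclideanSpace ℝ (Fin d)) :
    inX m (lineConf c ξ) := by
  unfold inX lineConf
  simp only [smul_smul, ← Finset.sum_smul, hc, zero_smul]

lemma mnorm_lineConf_sq {m : Fin N → ℝ} (hm : ∀ i, 0 < m i) (c : Fin N → ℝ)
    (ξ : EuclideanSpace ℝ (Fin d)) :
    mnorm m (lineConf c ξ) ^ 2 = (∑ k, m k * c k ^ 2) * ‖ξ‖ ^ 2 := by
  rw [mnorm_sq hm, Finset.sum_mul]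
  refine Finset.sum_congr rfl fun k _ => ?_
  rw [lineConf, norm_smul, mul_pow, Real.norm_eq_abs, sq_abs, mul_assoc]

lemma continuous_lineConf (c : Fin N → ℝ) :
    Continuous (lineConf c : EuclideanSpace ℝ (Fin d) → Conf d N) := by
  unfold lineConf
  fun_prop

/-- Averaging the potential over collinear perturbations increases it by at most a factor
`1 + 2 h`, and any gain `δ` for a pair of particles is a gain for the whole potential. -/
lemma lintegral_potE_paretoMixture_add_le (hd : 2 ≤ d) {m : Fin N → ℝ} {h : ℝ} (hh : 0 < h)
    (hh1 : h ≤ 1 / 2) {c : Fin N → ℝ} {i j : Fin N} (hij : i < j) (hc : c i - c j = 1)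
    (x : Conf d N) (f : ℝ) (δ : ℝ≥0∞)
    (hδ : (∫⁻ ξ, ‖x i - x j + f • ξ‖ₑ⁻¹ ∂(paretoMixture (EuclideanSpace ℝ (Fin d)) h)) + δ ≤
      ENNReal.ofReal (1 + 2 * h) * ‖x i - x j‖ₑ⁻¹) :
    (∫⁻ ξ, potE m (x + f • lineConf c ξ) ∂(paretoMixture (EuclideanSpace ℝ (Fin d)) h)) +
      ENNReal.ofReal (m i * m j) * δ ≤ ENNReal.ofReal (1 + 2 * h) * potE m x := by
  set ν := paretoMixture (EuclideanSpace ℝ (Fin d)) h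
  have hpair : ∀ (k l : Fin N) (ξ : EuclideanSpace ℝ (Fin d)),
      (x + f • lineConf c ξ) k - (x + f • lineConf c ξ) l =
        x k - x l + (f * (c k - c l)) • ξ := fun k l ξ => by
    simp only [Pi.add_apply, Pi.smul_apply, lineConf]
    module
  have hmeas : ∀ k l : Fin N, Measurable fun ξ : EuclideanSpace ℝ (Fin d) =>
      if k < l then ENNReal.ofReal (m k * m l) * ‖x k - x l + (f * (c k - c l)) • ξ‖ₑ⁻¹ else 0 := by
    intro k l
    split_ifs
    · exact Measurable.const_mul (by fun_prop) _
    · exact measurable_const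
  have hsum : ENNReal.ofReal (m i * m j) * δ = ∑ k : Fin N, ∑ l : Fin N,
      if k = i ∧ l = j then ENNReal.ofReal (m i * m j) * δ else 0 := by
    simp [ite_and]
  unfold potE
  simp only [hpair]
  rw [lintegral_finsetSum _ fun k _ => Finset.measurable_sum _ fun l _ => hmeas k l, hsum,
    ← Finset.sum_add_distrib, Finset.mul_sum]
  refine Finset.sum_le_sum fun k _ => ?_
  rw [lintegral_finsetSum _ fun l _ => hmeas k l, ← Finset.sum_add_distrib, Finset.mul_sum]
  refine Finset.sum_le_sum fun l _ => ?_
  by_cases hkl : k < l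
  · simp only [if_pos hkl]
    rw [lintegral_const_mul' _ _ ENNReal.ofReal_ne_top, mul_left_comm]
    split_ifs with heq
    · obtain ⟨rfl, rfl⟩ := heq
      rw [hc, mul_one, ← mul_add]
      exact mul_le_mul' le_rfl hδ
    · rw [add_zero]
      exact mul_le_mul' le_rfl (lintegral_inv_enorm_paretoMixture_le_mul (by simpa) hh hh1 _ _)
  · have : ¬ (k = i ∧ l = j) := fun h => hkl (h.1 ▸ h.2 ▸ hij)
    simp [hkl, this]

lemma lintegral_inv_enorm_add_le_of_norm_le (hd : 2 ≤ d) {h : ℝ} (hh : 0 < h) (hh1 : h ≤ 1 / 2)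
    {f : ℝ} (hf : 1 / 2 ≤ |f|) {y : EuclideanSpace ℝ (Fin d)} (hy : ‖y‖ ≤ h / 10) :
    (∫⁻ ξ, ‖y + f • ξ‖ₑ⁻¹ ∂(paretoMixture (EuclideanSpace ℝ (Fin d)) h)) +
      ENNReal.ofReal (5 / h) ≤ ENNReal.ofReal (1 + 2 * h) * ‖y‖ₑ⁻¹ := by
  calc _ ≤ ENNReal.ofReal (5 / h) + ENNReal.ofReal (5 / h) :=
        add_le_add (lintegral_inv_enorm_paretoMixture_le_const (by simpa) hh hh1 hf y) le_rfl
    _ = (ENNReal.ofReal (h / 10))⁻¹ := by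
        rw [← ENNReal.ofReal_add (by positivity) (by positivity),
          ← ENNReal.ofReal_inv_of_pos (by positivity)]
        congr 1
        field_simp
        norm_num
    _ ≤ ‖y‖ₑ⁻¹ := by
        rw [ENNReal.inv_le_inv, ← ofReal_norm]
        exact ENNReal.ofReal_le_ofReal hy
    _ ≤ _ := le_mul_of_one_le_left (zero_le) (by
        rw [ENNReal.one_le_ofReal]; linarith)

/-- If a curve is minimal to second order in collinear directions, then two of its particles can
be close to each other only for a short time. -/
lemma mul_time_le_of_second_order (hd : 2 ≤ d) {m : Fin N → ℝ} (hm : ∀ i, 0 < m i) {h : ℝ}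
    (hh : 0 < h) (hh1 : h ≤ 1 / 2) {c : Fin N → ℝ} {i j : Fin N} (hij : i < j)
    (hc : c i - c j = 1) {Γ : ℝ → Conf d N} (hΓ : Measurable Γ) {f : ℝ → ℝ} (hf : Measurable f)
    {I : Set ℝ} {t₀ s κ M : ℝ} (hs : 0 ≤ s) (hκ : 0 ≤ κ) (hM : 0 ≤ M) (hJ : Ioc t₀ (t₀ + s) ⊆ I)
    (hf2 : ∀ t ∈ Ioc t₀ (t₀ + s), 1 / 2 ≤ |f t|)
    (hclose : ∀ t ∈ Ioc t₀ (t₀ + s), ‖Γ t i - Γ t j‖ ≤ h / 10)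
    (hpot : ∫⁻ t in I, potE m (Γ t) ≤ ENNReal.ofReal M)
    (hmin : ∀ ξ, 2 * ∫⁻ t in I, potE m (Γ t) ≤
      (∫⁻ t in I, potE m (Γ t + f t • lineConf c ξ)) +
      (∫⁻ t in I, potE m (Γ t + f t • -lineConf c ξ)) + ENNReal.ofReal (κ * ‖ξ‖ ^ 2)) :
    10 * (m i * m j) / h * s ≤ 4 * h * M + κ * (2 * 2 ^ (d / 2 : ℝ) * h) := by
  set ν := paretoMixture (EuclideanSpace ℝ (Fin d)) h with hν
  have : IsProbabilityMeasure ν := isProbabilityMeasure_paretoMixture hh (by linarith)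
  set L := ∫⁻ t in I, potE m (Γ t) with hL
  set g := ENNReal.ofReal (m i * m j) * (ENNReal.ofReal (5 / h) * ENNReal.ofReal s) with hg
  have haverage : ∀ F : ℝ → ℝ, Measurable F → (∀ t, |F t| = |f t|) →
      (∫⁻ ξ, ∫⁻ t in I, potE m (Γ t + F t • lineConf c ξ) ∂volume ∂ν) + g ≤
        ENNReal.ofReal (1 + 2 * h) * L := by
    intro F hF hFf
    have hjoint : Measurable (Function.uncurry fun (ξ : EuclideanSpace ℝ (Fin d)) (t : ℝ) =>
        potE m (Γ t + F t • lineConf c ξ)) := by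
      refine (measurable_potE m).comp ((hΓ.comp measurable_snd).add ?_)
      exact (hF.comp measurable_snd).smul ((continuous_lineConf c).measurable.comp measurable_fst)
    rw [lintegral_lintegral_swap hjoint.aemeasurable]
    have hgI : g = ∫⁻ t in I, ENNReal.ofReal (m i * m j) *
        (Ioc t₀ (t₀ + s)).indicator (fun _ => ENNReal.ofReal (5 / h)) t := by
      rw [lintegral_const_mul' _ _ ENNReal.ofReal_ne_top, lintegral_indicator measurableSet_Ioc,
        Measure.restrict_restrict measurableSet_Ioc, inter_eq_left.2 hJ, setLIntegral_const,
        Real.volume_Ioc, add_sub_cancel_left]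
    rw [hgI, ← lintegral_add_right _ ((measurable_const.indicator measurableSet_Ioc).const_mul _),
      ← lintegral_const_mul' _ _ ENNReal.ofReal_ne_top]
    refine lintegral_mono fun t => ?_
    refine lintegral_potE_paretoMixture_add_le hd hh hh1 hij hc _ _ _ ?_
    by_cases ht : t ∈ Ioc t₀ (t₀ + s)
    · rw [indicator_of_mem ht]
      exact lintegral_inv_enorm_add_le_of_norm_le hd hh hh1 (hFf t ▸ hf2 t ht) (hclose t ht)
    · rw [indicator_of_notMem ht, add_zero]
      exact lintegral_inv_enorm_paretoMixture_le_mul (by simpa) hh hh1 _ _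
  have h1 := haverage f hf fun _ => rfl
  have h2 := haverage (fun t => -f t) hf.neg fun _ => abs_neg _
  have hmeas : ∀ F : ℝ → ℝ, Measurable F → Measurable fun ξ : EuclideanSpace ℝ (Fin d) =>
      ∫⁻ t in I, potE m (Γ t + F t • lineConf c ξ) := fun F hF => by
    refine Measurable.lintegral_prod_right' (f := fun p : EuclideanSpace ℝ (Fin d) × ℝ =>
      potE m (Γ p.2 + F p.2 • lineConf c p.1)) ?_
    refine (measurable_potE m).comp ((hΓ.comp measurable_snd).add ?_)
    exact (hF.comp measurable_snd).smul ((continuous_lineConf c).measurable.comp measurable_fst)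
  have h3 : 2 * L ≤ (∫⁻ ξ, ∫⁻ t in I, potE m (Γ t + f t • lineConf c ξ) ∂volume ∂ν) +
      (∫⁻ ξ, ∫⁻ t in I, potE m (Γ t + -f t • lineConf c ξ) ∂volume ∂ν) +
      ENNReal.ofReal (κ * (2 * 2 ^ (d / 2 : ℝ) * h)) := by
    calc 2 * L = ∫⁻ _, 2 * L ∂ν := by simp
      _ ≤ ∫⁻ ξ, ((∫⁻ t in I, potE m (Γ t + f t • lineConf c ξ)) +
          (∫⁻ t in I, potE m (Γ t + -f t • lineConf c ξ)) +
          ENNReal.ofReal κ * ENNReal.ofReal (‖ξ‖ ^ 2)) ∂ν := by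
        refine lintegral_mono fun ξ => ?_
        have := hmin ξ
        simp only [smul_neg, ← neg_smul, ENNReal.ofReal_mul hκ] at this
        exact this
      _ ≤ _ := by
        rw [lintegral_add_right _ (by fun_prop), lintegral_add_left (hmeas f hf),
          lintegral_const_mul' _ _ ENNReal.ofReal_ne_top, ENNReal.ofReal_mul hκ]
        gcongr
        have := lintegral_sq_norm_paretoMixture_le (V := EuclideanSpace ℝ (Fin d)) hh
          (by linarith)
        simpa using this
  have h4 : 2 * L + 2 * g ≤ 2 * (ENNReal.ofReal (1 + 2 * h) * L) +
      ENNReal.ofReal (κ * (2 * 2 ^ (d / 2 : ℝ) * h)) := by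
    calc _ ≤ _ := add_le_add h3 le_rfl
      _ = ((∫⁻ ξ, ∫⁻ t in I, potE m (Γ t + f t • lineConf c ξ) ∂volume ∂ν) + g) +
          ((∫⁻ ξ, ∫⁻ t in I, potE m (Γ t + -f t • lineConf c ξ) ∂volume ∂ν) + g) +
          ENNReal.ofReal (κ * (2 * 2 ^ (d / 2 : ℝ) * h)) := by ring
      _ ≤ _ := by
        rw [two_mul (ENNReal.ofReal (1 + 2 * h) * L)]
        gcongr
  have hmm : 0 ≤ m i * m j := (mul_pos (hm i) (hm j)).le
  have hLt : L ≠ ⊤ := ne_top_of_le_ne_top ENNReal.ofReal_ne_top hpot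
  have hLM : L.toReal ≤ M := ENNReal.toReal_le_of_le_ofReal hM hpot
  rw [← ENNReal.ofReal_toReal hLt, hg, show (2 : ℝ≥0∞) = ENNReal.ofReal 2 by simp,
    ← ENNReal.ofReal_mul (by positivity), ← ENNReal.ofReal_mul (by positivity),
    ← ENNReal.ofReal_mul (by positivity), ← ENNReal.ofReal_mul (by positivity),
    ← ENNReal.ofReal_mul (by positivity), ← ENNReal.ofReal_mul (by positivity),
    ← ENNReal.ofReal_add (by positivity) (by positivity),
    ← ENNReal.ofReal_add (by positivity) (by positivity),
    ENNReal.ofReal_le_ofReal_iff (by positivity)] at h4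
  have h5 : 10 * (m i * m j) / h * s = 2 * (m i * m j * (5 / h * s)) := by ring
  have h6 : h * L.toReal ≤ h * M := by gcongr
  rw [h5]
  linarith

/-- Minimizers with uniformly bounded energy keep a uniform distance between two particles away
from the initial time. -/
lemma exists_pos_le_norm_sub_of_minimizer (hd : 2 ≤ d) {m : Fin N → ℝ} (hm : ∀ i, 0 < m i)
    {μ : ℝ} (hμ : 0 < μ) (hμm : ∀ i, μ ≤ m i) (a : Conf d N) {i j : Fin N} (hij : i < j)
    {τ E M : ℝ} (hτ : 0 < τ) (hE : 0 ≤ E) (hM : 0 ≤ M) :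
    ∃ ε > 0, ∀ (x : Conf d N) (φ φ' : ℝ → Conf d N), InD m 1 ⊤ φ φ' →
      hypAction m a x ⊤ φ φ' = hypInf m a x ⊤ → hypInf m a x ⊤ ≠ ⊤ →
      ∫ t in Ioi 1, mnorm m (φ' t) ^ 2 ≤ E →
      (∀ t₀, 1 ≤ t₀ - τ →
        ∫⁻ t in Ioc (t₀ - τ) (t₀ + τ), potE m (hypCurve a x φ t) ≤ ENNReal.ofReal M) →
      ∀ t₀, 1 ≤ t₀ - τ → ε ≤ ‖hypCurve a x φ t₀ i - hypCurve a x φ t₀ j‖ := by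
  have hmi := hm i
  have hmj := hm j
  set c : Fin N → ℝ := fun k => (if k = i then m j / (m i + m j) else 0) +
    (if k = j then -(m i / (m i + m j)) else 0) with hc
  have hc0 : ∑ k, m k * c k = 0 := by
    simp only [hc, mul_add, mul_ite, mul_zero, Finset.sum_add_distrib, Finset.sum_ite_eq',
      Finset.mem_univ, if_true]
    ring
  have hcij : c i - c j = 1 := by
    simp only [hc, if_true, if_neg hij.ne, if_neg hij.ne']
    field_simp
    ring
  set κ : ℝ := 2 / τ * ∑ k, m k * c k ^ 2 with hκ
  have hκ0 : 0 ≤ κ := mul_nonneg (by positivity)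
    (Finset.sum_nonneg fun k _ => mul_nonneg (hm k).le (sq_nonneg _))
  set D : ℝ := 10 * (4 * M + κ * (2 * 2 ^ (d / 2 : ℝ))) + 1 with hD
  have hD1 : 0 < D := by positivity
  set η : ℝ := min √(m i * m j / (2 * D)) (1 / (20 * √τ)) with hη
  have hη0 : 0 < η := by positivity
  have hηD : η ^ 2 * D < m i * m j := by
    have h1 : η ^ 2 ≤ m i * m j / (2 * D) := by
      rw [← Real.sq_sqrt (show 0 ≤ m i * m j / (2 * D) by positivity)]
      exact pow_le_pow_left₀ hη0.le (min_le_left _ _) 2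
    calc η ^ 2 * D ≤ m i * m j / (2 * D) * D := by gcongr
      _ = m i * m j / 2 := by field_simp
      _ < _ := half_lt_self (by positivity)
  have hητ : 10 * η * √τ ≤ 1 / 2 := by
    have h1 : η ≤ 1 / (20 * √τ) := min_le_right _ _
    calc 10 * η * √τ ≤ 10 * (1 / (20 * √τ)) * √τ := by gcongr
      _ = _ := by field_simp; norm_num
  set K : ℝ := 4 / μ * E + 2 * ‖a i - a j‖ ^ 2 * (τ / 2) with hK
  obtain ⟨ε, hε, H⟩ := exists_scale_norm_le (V := EuclideanSpace ℝ (Fin d)) hη0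
    (show 0 ≤ K by positivity) ⌈K / (η ^ 2 / 4)⌉₊ (τ / 2) (by positivity)
  refine ⟨ε, hε, fun x φ φ' h hmin hfin hEn hpot t₀ ht₀ => ?_⟩
  by_contra! hlt
  set G : ℝ → ℝ := fun t => ∫ y in Ioc 1 t, ‖relVel a φ' i j y‖ ^ 2 with hG
  have hGmono : Monotone G := fun s t hst =>
    setIntegral_mono_set (h.integrableOn_sq_relVel hm hμ hμm a le_rfl hij.ne)
      (ae_of_all _ fun _ => sq_nonneg _) (Ioc_subset_Ioc_right hst).eventuallyLE
  have hGsub : ∀ s t, 1 ≤ s → s ≤ t → G t - G s = ∫ y in Ioc s t, ‖relVel a φ' i j y‖ ^ 2 := by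
    intro s t hs hst
    simp only [hG]
    rw [← Ioc_union_Ioc_eq_Ioc hs hst,
      setIntegral_union (Ioc_disjoint_Ioc_of_le le_rfl) measurableSet_Ioc
        (h.integrableOn_sq_relVel hm hμ hμm a le_rfl hij.ne)
        (h.integrableOn_sq_relVel hm hμ hμm a hs hij.ne)]
    ring
  have hGK : G (t₀ + τ / 2) - G t₀ ≤ K := by
    rw [hGsub _ _ (by linarith) (by linarith)]
    refine (h.integral_sq_relVel_le hm hμ hμm hEn a (by linarith) (by linarith) hij.ne).trans ?_
    rw [add_sub_cancel_left]
  obtain ⟨s, hs0, hsτ, hsmall⟩ := H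
    (fun t => hypCurve a x φ t i - hypCurve a x φ t j) G t₀
    (fun s t hs hst _ => by
      rw [h.hypCurve_sub_eq_integral a x (by linarith) hst i j, hGsub _ _ (by linarith) hst]
      exact sq_norm_integral_Ioc_le hst (h.integrableOn_relVel a (by linarith) i j)
        (h.integrableOn_sq_relVel hm hμ hμm a (by linarith) hij.ne))
    hGmono hGK
    (hGK.trans (by
      have := Nat.le_ceil (K / (η ^ 2 / 4))
      rwa [div_le_iff₀ (by positivity)] at this))
    hlt.le
  have hsub : Ioc (t₀ - τ) (t₀ + τ) ⊆ Ioi 1 := fun x hx => lt_of_le_of_lt ht₀ hx.1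
  set Γ : ℝ → Conf d N := fun t => hypCurve a x φ (max 1 t) with hΓ
  have hΓc : Continuous Γ := (h.continuousOn_hypCurve a x).comp_continuous
    (by fun_prop) fun t => mem_Ici.2 (le_max_left _ _)
  have hΓe : ∀ t, 1 ≤ t → Γ t = hypCurve a x φ t := fun t ht => by
    simp only [hΓ, max_eq_right ht]
  have hcongr : ∀ w : ℝ → Conf d N,
      ∫⁻ t in Ioc (t₀ - τ) (t₀ + τ), potE m (Γ t + w t) =
        ∫⁻ t in Ioc (t₀ - τ) (t₀ + τ), potE m (hypCurve a x φ t + w t) := fun w =>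
    setLIntegral_congr_fun measurableSet_Ioc fun t ht => by
      rw [hΓe t (hsub ht).out.le]
  have hcongr0 : ∫⁻ t in Ioc (t₀ - τ) (t₀ + τ), potE m (Γ t) =
      ∫⁻ t in Ioc (t₀ - τ) (t₀ + τ), potE m (hypCurve a x φ t) := by
    simpa using hcongr 0
  have hs1 : √s ≤ √τ := Real.sqrt_le_sqrt (by linarith)
  have hs2 : 0 < √s := Real.sqrt_pos.2 hs0
  have key := mul_time_le_of_second_order hd hm (h := 10 * η * √s) (by positivity)
    (le_trans (by gcongr) hητ) hij hcij hΓc.measurable (continuous_tent t₀ τ).measurable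
    (I := Ioc (t₀ - τ) (t₀ + τ)) (t₀ := t₀) (s := s) (κ := κ) (M := M) hs0.le hκ0 hM
    (Ioc_subset_Ioc (by linarith) (by linarith))
    (fun t ht => (half_le_tent hτ ht.1.le (by linarith [ht.2])).trans (le_abs_self _))
    (fun t ht => by
      rw [hΓe t (by linarith [ht.1])]
      refine (hsmall t ⟨ht.1.le, ht.2⟩).trans (le_of_eq ?_)
      ring)
    (hcongr0 ▸ hpot t₀ ht₀)
    (fun ξ => by
      rw [hcongr0, hcongr fun t => tent t₀ τ t • lineConf c ξ,
        hcongr fun t => tent t₀ τ t • -lineConf c ξ]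
      refine (two_mul_lintegral_potE_le hm h hmin hfin (inX_lineConf hc0 ξ) hτ ht₀).trans ?_
      rw [mnorm_lineConf_sq hm, hκ, mul_assoc])
  have hss : √s * √s = s := Real.mul_self_sqrt hs0.le
  have e1 : 10 * (m i * m j) / (10 * η * √s) * s = m i * m j / η * √s := by
    calc _ = 10 * (m i * m j) / (10 * η * √s) * (√s * √s) := by rw [hss]
      _ = _ := by field_simp
  have e2 : 4 * (10 * η * √s) * M + κ * (2 * 2 ^ (d / 2 : ℝ) * (10 * η * √s)) =
      (η * (D - 1)) * √s := by
    rw [hD]; ring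
  rw [e1, e2] at key
  have h3 : m i * m j / η ≤ η * (D - 1) := le_of_mul_le_mul_right key hs2
  rw [div_le_iff₀ hη0] at h3
  nlinarith [sq_nonneg η]

/-- The constant in the linear lower bound of the potential along `t ↦ t • a`. -/
def potSlope (m : Fin N → ℝ) (a : Conf d N) : ℝ :=
  ∑ i : Fin N, ∑ j : Fin N, if i < j then 2 * (m i * m j) / ‖a i - a j‖ ^ 2 else 0

lemma potSlope_nonneg {m : Fin N → ℝ} (hm : ∀ i, 0 < m i) (a : Conf d N) : 0 ≤ potSlope m a := by
  refine Finset.sum_nonneg fun i _ => Finset.sum_nonneg fun j _ => ?_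
  have := hm i
  have := hm j
  split_ifs <;> positivity

lemma inv_sub_inv_ge {r p : ℝ} (hr : 0 < r) (hp : 0 < p) : (p - r) / p ^ 2 ≤ 1 / r - 1 / p := by
  have : 1 / r - 1 / p - (p - r) / p ^ 2 = (p - r) ^ 2 / (r * p ^ 2) := by
    field_simp
  have h2 : 0 ≤ (p - r) ^ 2 / (r * p ^ 2) := by positivity
  linarith

lemma sqrt_div_sq_eq_rpow {t : ℝ} (ht : 0 < t) : √t / t ^ 2 = t ^ (-(3 / 2) : ℝ) := by
  rw [Real.sqrt_eq_rpow, ← Real.rpow_natCast, ← Real.rpow_sub ht]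
  norm_num

lemma integrableOn_rpow_neg_three_halves :
    IntegrableOn (fun t : ℝ => t ^ (-(3 / 2) : ℝ)) (Ioi 1) :=
  integrableOn_Ioi_rpow_of_lt (by norm_num) one_pos

lemma integral_rpow_neg_three_halves : ∫ t in Ioi (1 : ℝ), t ^ (-(3 / 2) : ℝ) = 2 := by
  rw [integral_Ioi_rpow_of_lt (by norm_num) one_pos]
  norm_num

lemma neg_potSlope_mul_le_U_sub {m : Fin N → ℝ} (hm : ∀ i, 0 < m i) {a x : Conf d N}
    (ha : ¬ collision a) (hx : ¬ collision x) {t S : ℝ} (ht : 0 < t)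
    (hS : ∀ k, ‖x k - t • a k‖ ≤ √t * S) :
    -(potSlope m a * S * t ^ (-(3 / 2) : ℝ)) ≤ U m x - U m (t • a) := by
  rw [← sqrt_div_sq_eq_rpow ht]
  unfold potSlope U
  simp only [Finset.sum_mul, ← Finset.sum_neg_distrib, ← Finset.sum_sub_distrib]
  refine Finset.sum_le_sum fun i _ => Finset.sum_le_sum fun j _ => ?_
  split_ifs with hij
  · have hmm := mul_pos (hm i) (hm j)
    have hr : 0 < ‖x i - x j‖ := norm_pos_iff.2 (sub_ne_zero.2 fun h => hx ⟨i, j, hij.ne, h⟩)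
    have hq : 0 < ‖a i - a j‖ := norm_pos_iff.2 (sub_ne_zero.2 fun h => ha ⟨i, j, hij.ne, h⟩)
    have hp : ‖(t • a) i - (t • a) j‖ = t * ‖a i - a j‖ := by
      rw [Pi.smul_apply, Pi.smul_apply, ← smul_sub, norm_smul, norm_of_nonneg ht.le]
    have h1 := inv_sub_inv_ge hr (mul_pos ht hq)
    have h2 : ‖x i - x j‖ - t * ‖a i - a j‖ ≤ 2 * (√t * S) := by
      have e : x i - x j = ((x i - t • a i) - (x j - t • a j)) + t • (a i - a j) := by module
      have h3 : ‖x i - x j‖ ≤ ‖x i - t • a i‖ + ‖x j - t • a j‖ + t * ‖a i - a j‖ := by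
        calc _ = _ := congrArg _ e
          _ ≤ ‖(x i - t • a i) - (x j - t • a j)‖ + ‖t • (a i - a j)‖ := norm_add_le _ _
          _ ≤ _ := by
            rw [norm_smul, norm_of_nonneg ht.le]
            gcongr
            exact norm_sub_le _ _
      linarith [hS i, hS j]
    rw [hp]
    have h4 : -(2 * (√t * S)) / (t * ‖a i - a j‖) ^ 2 ≤ 1 / ‖x i - x j‖ - 1 / (t * ‖a i - a j‖) :=
      le_trans (by gcongr; linarith) h1
    calc _ = m i * m j * (-(2 * (√t * S)) / (t * ‖a i - a j‖) ^ 2) := by field_simp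
      _ ≤ m i * m j * (1 / ‖x i - x j‖ - 1 / (t * ‖a i - a j‖)) := by gcongr
      _ = _ := by ring
  · simp

/-- The deviation of `hypCurve` from uniform motion. -/
lemma InD.norm_hypCurve_sub_le {m : Fin N → ℝ} (hm : ∀ i, 0 < m i) {μ : ℝ} (hμ : 0 < μ)
    (hμm : ∀ i, μ ≤ m i) {a x : Conf d N} {φ φ' : ℝ → Conf d N} (h : InD m 1 ⊤ φ φ') {R : ℝ}
    (hR : ∀ k, ‖x k - a k‖ ≤ R) {t : ℝ} (ht : 1 ≤ t) (k : Fin N) :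
    ‖hypCurve a x φ t k - t • a k‖ ≤
      √t * (√((∫ t in Ioi 1, mnorm m (φ' t) ^ 2) / μ) + R) := by
  set E := ∫ t in Ioi 1, mnorm m (φ' t) ^ 2
  have hE : 0 ≤ E := integral_nonneg fun _ => sq_nonneg _
  have hR0 : 0 ≤ R := (norm_nonneg _).trans (hR k)
  have h1 : ‖φ t k‖ ≤ √t * √(E / μ) := by
    rw [← Real.sqrt_mul (by linarith)]
    refine Real.le_sqrt_of_sq_le ((h.sq_norm_apply_le hm hμ hμm ht k).trans ?_)
    gcongr
    linarith
  have h2 : R ≤ √t * R := le_mul_of_one_le_left hR0 (Real.one_le_sqrt.2 ht)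
  have e : hypCurve a x φ t k - t • a k = φ t k + (x k - a k) := by
    simp only [hypCurve, Pi.add_apply, Pi.sub_apply, Pi.smul_apply]; module
  rw [e, mul_add]
  exact (norm_add_le _ _).trans (add_le_add h1 ((hR k).trans h2))

/-- Bounded action bounds the kinetic energy, and the potential energy on bounded intervals. -/
lemma exists_energy_bounds {m : Fin N → ℝ} (hm : ∀ i, 0 < m i) {μ : ℝ} (hμ : 0 < μ)
    (hμm : ∀ i, μ ≤ m i) {a : Conf d N} (ha : ¬ collision a) {B R : ℝ} (hR0 : 0 ≤ R) :
    ∃ E ≥ 0, ∃ M ≥ 0, ∀ (x : Conf d N) (φ φ' : ℝ → Conf d N), InD m 1 ⊤ φ φ' →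
      (∀ k, ‖x k - a k‖ ≤ R) → IntegrableOn (hypIntegrand m a x φ φ') (Ioi 1) →
      (∀ᵐ t ∂volume.restrict (Ioi 1), ¬ collision (hypCurve a x φ t)) →
      ∫ t in Ioi 1, hypIntegrand m a x φ φ' t ≤ B →
      ∫ t in Ioi 1, mnorm m (φ' t) ^ 2 ≤ E ∧
      ∀ τ > 0, ∀ t₀, 1 ≤ t₀ - τ →
        ∫⁻ t in Ioc (t₀ - τ) (t₀ + τ), potE m (hypCurve a x φ t) ≤
          ENNReal.ofReal (M + 2 * τ * U m a) := by
  set C := potSlope m a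
  have hC : 0 ≤ C := potSlope_nonneg hm a
  set E := max 0 (2 * (2 * B + 4 * C * R + 8 * C ^ 2 / μ))
  refine ⟨E, le_max_left _ _, max 0 (B + 2 * (C * (√(E / μ) + R))), le_max_left _ _,
    fun x φ φ' h hR hF hcol hB => ?_⟩
  set e := ∫ t in Ioi 1, mnorm m (φ' t) ^ 2 with he
  have he0 : 0 ≤ e := integral_nonneg fun _ => sq_nonneg _
  set S := √(e / μ) + R with hS
  have hS0 : 0 ≤ S := by positivity
  set V : ℝ → ℝ := fun t => U m (hypCurve a x φ t) - U m (t • a) with hV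
  have hVi : IntegrableOn V (Ioi 1) := integrableOn_U_sub h hF
  have hci : IntegrableOn (fun t : ℝ => C * S * t ^ (-(3 / 2) : ℝ)) (Ioi 1) :=
    integrableOn_rpow_neg_three_halves.const_mul _
  have hpos : ∀ᵐ t ∂volume.restrict (Ioi 1), 0 ≤ V t + C * S * t ^ (-(3 / 2) : ℝ) := by
    filter_upwards [hcol, ae_restrict_mem measurableSet_Ioi] with t ht ht1
    have := neg_potSlope_mul_le_U_sub hm ha ht (lt_trans one_pos ht1)
      fun k => h.norm_hypCurve_sub_le hm hμ hμm hR ht1.out.le k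
    simp only [hV]
    linarith
  have hVsum : IntegrableOn (fun t => V t + C * S * t ^ (-(3 / 2) : ℝ)) (Ioi 1) := hVi.add hci
  have hVint : ∫ t in Ioi 1, (V t + C * S * t ^ (-(3 / 2) : ℝ)) ≤ B - e / 2 + 2 * (C * S) := by
    have hFV : ∫ t in Ioi 1, hypIntegrand m a x φ φ' t = e / 2 + ∫ t in Ioi 1, V t := by
      rw [he, ← integral_div, ← integral_add (h.integrableOn_sq.div_const 2) hVi]
      refine integral_congr_ae (ae_of_all _ fun t => ?_)
      simp only [hypIntegrand, hV]
      ring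
    rw [integral_add hVi hci, integral_const_mul, integral_rpow_neg_three_halves]
    linarith
  have hVint0 := integral_nonneg_of_ae hpos
  have heE : e ≤ E := by
    refine le_trans ?_ (le_max_right _ _)
    have hy : √(e / μ) ^ 2 = e / μ := Real.sq_sqrt (by positivity)
    have h1 : 4 * C * √(e / μ) ≤ e / 2 + 8 * C ^ 2 / μ := by
      have h2 : 0 ≤ μ / 2 * (√(e / μ) - 4 * C / μ) ^ 2 := by positivity
      have h3 : μ / 2 * (√(e / μ) - 4 * C / μ) ^ 2 =
          μ / 2 * √(e / μ) ^ 2 - 4 * C * √(e / μ) + 8 * C ^ 2 / μ := by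
        field_simp; ring
      rw [h3, hy] at h2
      have h4 : μ / 2 * (e / μ) = e / 2 := by field_simp
      linarith
    have h5 : 2 * (C * S) = 2 * C * √(e / μ) + 2 * C * R := by rw [hS]; ring
    linarith
  refine ⟨heE, fun τ hτ t₀ ht₀ => ?_⟩
  have hsub : Ioc (t₀ - τ) (t₀ + τ) ⊆ Ioi 1 := fun x hx => lt_of_le_of_lt ht₀ hx.1
  have hU := integrableOn_U_hypCurve h hF (t := t₀ + τ) ht₀
  rw [lintegral_potE_eq hm (ae_restrict_of_ae_restrict_of_subset hsub hcol) hU]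
  refine ENNReal.ofReal_le_ofReal ?_
  have hcst : IntegrableOn (fun _ : ℝ => U m a) (Ioc (t₀ - τ) (t₀ + τ)) :=
    integrableOn_const (by simp)
  calc ∫ t in Ioc (t₀ - τ) (t₀ + τ), U m (hypCurve a x φ t)
      ≤ ∫ t in Ioc (t₀ - τ) (t₀ + τ), ((V t + C * S * t ^ (-(3 / 2) : ℝ)) + U m a) := by
        refine setIntegral_mono_on hU ((hVsum.mono_set hsub).add hcst) measurableSet_Ioc
          fun t ht => ?_
        have ht1 : 1 < t := hsub ht
        have h1 : U m (t • a) ≤ U m a := by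
          rw [U_smul m a (by linarith)]
          exact mul_le_of_le_one_left (U_nonneg hm a) (inv_le_one_of_one_le₀ ht1.le)
        have h2 : 0 ≤ C * S * t ^ (-(3 / 2) : ℝ) := by positivity
        simp only [hV]
        linarith
    _ = (∫ t in Ioc (t₀ - τ) (t₀ + τ), (V t + C * S * t ^ (-(3 / 2) : ℝ))) + 2 * τ * U m a := by
        rw [integral_add (hVsum.mono_set hsub) hcst, setIntegral_const, Measure.real,
          Real.volume_Ioc, ENNReal.toReal_ofReal (by linarith), smul_eq_mul]
        ring
    _ ≤ (∫ t in Ioi 1, (V t + C * S * t ^ (-(3 / 2) : ℝ))) + 2 * τ * U m a := by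
        gcongr
    _ ≤ _ := by
        gcongr
        refine le_trans ?_ (le_max_right _ _)
        have : C * S ≤ C * (√(E / μ) + R) := by rw [hS]; gcongr
        linarith

/-- The function rising linearly from `0` to `1` on `[1, 2]`. -/
def ramp (t : ℝ) : ℝ := max 0 (min t 2 - 1)

lemma continuous_ramp : Continuous ramp := by
  unfold ramp
  fun_prop

lemma ramp_nonneg (t : ℝ) : 0 ≤ ramp t := le_max_left _ _

lemma ramp_le_one (t : ℝ) : ramp t ≤ 1 :=
  max_le zero_le_one (by linarith [min_le_right t 2])

lemma ramp_of_mem {t : ℝ} (h1 : 1 ≤ t) (h2 : t ≤ 2) : ramp t = t - 1 := by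
  rw [ramp, min_eq_left h2, max_eq_right (by linarith)]

lemma ramp_of_ge {t : ℝ} (h2 : 2 ≤ t) : ramp t = 1 := by
  rw [ramp, min_eq_right h2]
  norm_num

lemma inD_ramp {m : Fin N → ℝ} {w : Conf d N} (hw : inX m w) :
    InD m 1 ⊤ (fun t => ramp t • w) (fun t => (Ioc (1 : ℝ) 2).indicator (1 : ℝ → ℝ) t • w) := by
  refine ⟨?_, fun t _ _ => ?_, fun t _ _ => ?_, fun t _ _ => ?_, ?_⟩
  · norm_num [ramp]
  · unfold inX at hw ⊢
    simp only [Pi.smul_apply, smul_comm (m _) (ramp t), ← Finset.smul_sum, hw, smul_zero]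
  · rw [integral_smul_const, setIntegral_indicator_one_Ioc le_rfl]
    rfl
  · exact ((integrableOn_const (C := (1 : ℝ)) (by simp)).indicator measurableSet_Ioc).smul_const w
  · rw [timeSet_top]
    have hI : IntegrableOn (fun _ : ℝ => mnorm m w ^ 2) (Ioc (1 : ℝ) 2) :=
      integrableOn_const (by simp)
    refine (hI.integrable_indicator measurableSet_Ioc).integrableOn.congr (ae_of_all _ fun t => ?_)
    by_cases ht : t ∈ Ioc (1 : ℝ) 2
    · simp [ht]
    · simp [ht, mnorm, minner]

/-- A curve avoiding the origin and staying close to a uniform motion grows linearly. -/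
lemma exists_mul_le_norm {V : Type*} [NormedAddCommGroup V] [NormedSpace ℝ V] {f : ℝ → V} {u : V}
    {K : ℝ} (hf : Continuous f) (hf0 : ∀ t, 1 ≤ t → f t ≠ 0) (hu : u ≠ 0)
    (hK : ∀ t, ‖f t - t • u‖ ≤ K) : ∃ c > 0, ∀ t, 1 ≤ t → c * t ≤ ‖f t‖ := by
  have hu' : 0 < ‖u‖ := norm_pos_iff.2 hu
  set T := max 1 (2 * K / ‖u‖)
  have hT1 : 1 ≤ T := le_max_left _ _
  obtain ⟨s, hs, hmin⟩ := isCompact_Icc.exists_isMinOn (nonempty_Icc.2 hT1) hf.norm.continuousOn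
  have hfs : 0 < ‖f s‖ := norm_pos_iff.2 (hf0 s hs.1)
  refine ⟨min (‖u‖ / 2) (‖f s‖ / T), by positivity, fun t ht => ?_⟩
  rcases le_total t T with h | h
  · calc _ ≤ ‖f s‖ / T * T := by gcongr; exact min_le_right _ _
      _ = ‖f s‖ := by field_simp
      _ ≤ _ := hmin ⟨ht, h⟩
  · have h1 : 2 * K ≤ t * ‖u‖ := by
      rw [← div_le_iff₀ hu']; exact (le_max_right _ _).trans h
    have h2 : t * ‖u‖ ≤ ‖f t‖ + K := by
      calc t * ‖u‖ = ‖f t - (f t - t • u)‖ := by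
            rw [sub_sub_cancel, norm_smul, norm_of_nonneg (by linarith)]
        _ ≤ ‖f t‖ + ‖f t - t • u‖ := norm_sub_le _ _
        _ ≤ _ := by gcongr; exact hK t
    have h3 : min (‖u‖ / 2) (‖f s‖ / T) * t ≤ ‖u‖ / 2 * t := by
      gcongr; exact min_le_left _ _
    linarith

lemma volume_smul_add_mem_span_singleton (hd : 2 ≤ d) {c : ℝ} (hc : c ≠ 0)
    (p u : EuclideanSpace ℝ (Fin d)) :
    volume {ξ : EuclideanSpace ℝ (Fin d) | c • ξ + p ∈ Submodule.span ℝ {u}} = 0 := by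
  have hs : AffineSubspace.mk' (-(c⁻¹ • p)) (Submodule.span ℝ {u}) ≠ ⊤ := fun h => by
    have h1 := congrArg AffineSubspace.direction h
    rw [AffineSubspace.direction_mk', AffineSubspace.direction_top] at h1
    have h2 := finrank_span_le_card (R := ℝ) ({u} : Set (EuclideanSpace ℝ (Fin d)))
    rw [h1, finrank_top, finrank_euclideanSpace_fin] at h2
    simp at h2
    omega
  refine measure_mono_null (fun ξ hξ => ?_) (Measure.addHaar_affineSubspace volume _ hs)
  have h1 := Submodule.smul_mem _ c⁻¹ (show c • ξ + p ∈ Submodule.span ℝ {u} from hξ)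
  rw [smul_add, inv_smul_smul₀ hc] at h1
  simpa [AffineSubspace.mem_mk'] using h1

/-- A direction along which distinct particles can be pushed so that a ramp followed by uniform
motion avoids collisions. -/
lemma exists_lineConf_ramp_ne_zero (hd : 2 ≤ d) {c : Fin N → ℝ} (hc : Function.Injective c)
    (a : Conf d N) {x : Conf d N} (hx : ¬ collision x) :
    ∃ ξ : EuclideanSpace ℝ (Fin d), ∀ i j, i ≠ j → ∀ t, 1 ≤ t →
      hypCurve a x (fun t => ramp t • lineConf c ξ) t i -
        hypCurve a x (fun t => ramp t • lineConf c ξ) t j ≠ 0 := by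
  have hae : ∀ᵐ ξ : EuclideanSpace ℝ (Fin d), ∀ i j, i ≠ j →
      (c i - c j) • ξ + (a i - a j) ∉ Submodule.span ℝ {x i - x j} ∧
      (c i - c j) • ξ + (x i - x j) ∉ Submodule.span ℝ {a i - a j} := by
    simp only [ae_all_iff, eventually_and]
    intro i j hij
    have hcij : c i - c j ≠ 0 := sub_ne_zero.2 (hc.ne hij)
    constructor
    · rw [ae_iff]
      simpa using volume_smul_add_mem_span_singleton hd hcij _ _
    · rw [ae_iff]
      simpa using volume_smul_add_mem_span_singleton hd hcij _ _
  obtain ⟨ξ, hξ⟩ := hae.exists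
  refine ⟨ξ, fun i j hij t ht h0 => ?_⟩
  have e : hypCurve a x (fun t => ramp t • lineConf c ξ) t i -
        hypCurve a x (fun t => ramp t • lineConf c ξ) t j =
      (x i - x j) + (t - 1) • (a i - a j) + ramp t • (c i - c j) • ξ := by
    simp only [hypCurve, lineConf, Pi.add_apply, Pi.sub_apply, Pi.smul_apply]
    module
  rw [e] at h0
  rcases le_total t 2 with h2 | h2
  · rw [ramp_of_mem ht h2] at h0
    rcases ht.eq_or_lt with rfl | ht'
    · simp only [sub_self, zero_smul, add_zero] at h0
      exact hx ⟨i, j, hij, sub_eq_zero.1 h0⟩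
    · refine (hξ i j hij).1 (Submodule.mem_span_singleton.2 ⟨-(t - 1)⁻¹, ?_⟩)
      have h3 : (t - 1) ≠ 0 := by linarith
      have h4 : x i - x j = -((t - 1) • ((c i - c j) • ξ + (a i - a j))) := by
        rw [eq_neg_iff_add_eq_zero, ← h0]; module
      rw [h4, neg_smul, smul_neg, neg_neg, inv_smul_smul₀ h3]
  · rw [ramp_of_ge h2] at h0
    refine (hξ i j hij).2 (Submodule.mem_span_singleton.2 ⟨-(t - 1), ?_⟩)
    rw [neg_smul, neg_eq_iff_add_eq_zero, ← h0]
    module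

lemma abs_U_sub_le {m : Fin N → ℝ} (hm : ∀ i, 0 < m i) {a x : Conf d N} (ha : ¬ collision a)
    {c K t : ℝ} (hc : 0 < c) (ht : 0 < t) (hx : ∀ i j, i ≠ j → c * t ≤ ‖x i - x j‖)
    (hK : ∀ i j, i ≠ j → ‖(x i - x j) - t • (a i - a j)‖ ≤ K) :
    |U m x - U m (t • a)| ≤ K / c * U m a * t ^ (-2 : ℝ) := by
  have ht2 : t ^ (-2 : ℝ) = (t ^ 2)⁻¹ := by
    rw [Real.rpow_neg ht.le]; norm_num
  rw [ht2]
  unfold U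
  simp only [Finset.mul_sum, Finset.sum_mul, ← Finset.sum_sub_distrib]
  refine (Finset.abs_sum_le_sum_abs _ _).trans (Finset.sum_le_sum fun i _ => ?_)
  refine (Finset.abs_sum_le_sum_abs _ _).trans (Finset.sum_le_sum fun j _ => ?_)
  split_ifs with hij
  · have hmm := mul_pos (hm i) (hm j)
    have hr := hx i j hij.ne
    have hct : 0 < c * t := by positivity
    have hr0 : 0 < ‖x i - x j‖ := hct.trans_le hr
    have hq : 0 < ‖a i - a j‖ := norm_pos_iff.2 (sub_ne_zero.2 fun h => ha ⟨i, j, hij.ne, h⟩)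
    have hp : ‖(t • a) i - (t • a) j‖ = t * ‖a i - a j‖ := by
      rw [Pi.smul_apply, Pi.smul_apply, ← smul_sub, norm_smul, norm_of_nonneg ht.le]
    have h1 : |t * ‖a i - a j‖ - ‖x i - x j‖| ≤ K := by
      rw [← hp, abs_sub_comm]
      refine (abs_norm_sub_norm_le _ _).trans ?_
      rw [Pi.smul_apply, Pi.smul_apply, ← smul_sub]
      exact hK i j hij.ne
    have hK0 : 0 ≤ K := (abs_nonneg _).trans h1
    rw [hp]
    have e : m i * m j / ‖x i - x j‖ - m i * m j / (t * ‖a i - a j‖) =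
        m i * m j * (t * ‖a i - a j‖ - ‖x i - x j‖) / (‖x i - x j‖ * (t * ‖a i - a j‖)) := by
      field_simp
    rw [e, abs_div, abs_mul, abs_of_pos hmm, abs_of_pos (show 0 < _ * (t * _) by positivity)]
    calc _ ≤ m i * m j * K / (c * t * (t * ‖a i - a j‖)) := by gcongr
      _ = _ := by field_simp
  · simp

/-- The minimal action is bounded above locally uniformly in the initial configuration. -/
lemma exists_hypInf_le (hd : 2 ≤ d) (hN : 2 ≤ N) {m : Fin N → ℝ} (hm : ∀ i, 0 < m i)
    {a xbar : Conf d N} (ha : ¬ collision a) (hx : ¬ collision xbar) :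
    ∃ B : ℝ, ∃ ρ > 0, ∀ x : Conf d N, ‖x - xbar‖ ≤ ρ → hypInf m a x ⊤ ≤ (B : EReal) := by
  have hne : Nonempty (Fin N) := ⟨⟨0, by omega⟩⟩
  have hsum : 0 < ∑ k, m k := Finset.sum_pos (fun k _ => hm k) Finset.univ_nonempty
  set c : Fin N → ℝ := fun k => (k : ℕ) - (∑ l, m l * (l : ℕ)) / ∑ l, m l with hc
  have hcinj : Function.Injective c := fun k l h => by
    simp only [hc] at h
    exact Fin.ext (by exact_mod_cast sub_left_injective h)
  have hc0 : ∑ k, m k * c k = 0 := by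
    simp only [hc, mul_sub, Finset.sum_sub_distrib, ← Finset.sum_mul]
    field_simp
    ring
  obtain ⟨ξ, hξ⟩ := exists_lineConf_ramp_ne_zero hd hcinj a hx
  set w : Conf d N := lineConf c ξ with hw
  set φ : ℝ → Conf d N := fun t => ramp t • w with hφ
  set φ' : ℝ → Conf d N := fun t => (Ioc (1 : ℝ) 2).indicator (1 : ℝ → ℝ) t • w with hφ'
  have hInD : InD m 1 ⊤ φ φ' := inD_ramp (inX_lineConf hc0 ξ)
  have hdev : ∀ (x : Conf d N) (t : ℝ) (i j : Fin N),
      ‖(hypCurve a x φ t i - hypCurve a x φ t j) - t • (a i - a j)‖ ≤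
        2 * (‖w‖ + ‖x - a‖) := by
    intro x t i j
    have hk : ∀ k, ‖ramp t • w k + (x - a) k‖ ≤ ‖w‖ + ‖x - a‖ := fun k => by
      refine (norm_add_le _ _).trans (add_le_add ?_ (norm_le_pi_norm _ k))
      rw [norm_smul, norm_of_nonneg (ramp_nonneg t)]
      exact (mul_le_of_le_one_left (norm_nonneg _) (ramp_le_one t)).trans (norm_le_pi_norm _ k)
    have e : (hypCurve a x φ t i - hypCurve a x φ t j) - t • (a i - a j) =
        (ramp t • w i + (x - a) i) - (ramp t • w j + (x - a) j) := by
      simp only [hypCurve, hφ, Pi.add_apply, Pi.sub_apply, Pi.smul_apply]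
      module
    rw [e, two_mul]
    exact (norm_sub_le _ _).trans (add_le_add (hk i) (hk j))
  have hcont : ∀ x, Continuous (hypCurve a x φ) := fun x => by
    have := continuous_ramp
    unfold hypCurve
    fun_prop
  have hgrowth : ∃ b > 0, ∀ i j, i ≠ j → ∀ t, 1 ≤ t →
      b * t ≤ ‖hypCurve a xbar φ t i - hypCurve a xbar φ t j‖ := by
    have H : ∀ p : Fin N × Fin N, ∃ b > 0, p.1 ≠ p.2 → ∀ t, 1 ≤ t →
        b * t ≤ ‖hypCurve a xbar φ t p.1 - hypCurve a xbar φ t p.2‖ := by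
      rintro ⟨i, j⟩
      by_cases hij : i = j
      · exact ⟨1, one_pos, fun h => absurd hij h⟩
      · have hc' := hcont xbar
        obtain ⟨b, hb, hb'⟩ := exists_mul_le_norm
          (f := fun t => hypCurve a xbar φ t i - hypCurve a xbar φ t j) (by fun_prop)
          (hξ i j hij) (sub_ne_zero.2 fun h => ha ⟨i, j, hij, h⟩) fun t => hdev xbar t i j
        exact ⟨b, hb, fun _ => hb'⟩
    choose b hb hb' using H
    obtain ⟨p, hp⟩ := Finite.exists_min b
    refine ⟨b p, hb p, fun i j hij t ht => le_trans ?_ (hb' (i, j) hij t ht)⟩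
    gcongr
    exact hp _
  obtain ⟨b, hb, hbt⟩ := hgrowth
  set K : ℝ := 2 * (‖w‖ + (b / 4 + ‖xbar - a‖)) with hK
  set g : ℝ → ℝ := fun t => mnorm m (φ' t) ^ 2 / 2 + K / (b / 2) * U m a * t ^ (-2 : ℝ) with hg
  have hpow : IntegrableOn (fun t : ℝ => K / (b / 2) * U m a * t ^ (-2 : ℝ)) (Ioi 1) :=
    (integrableOn_Ioi_rpow_of_lt (by norm_num) one_pos).const_mul _
  have hgi : IntegrableOn g (Ioi 1) := (hInD.integrableOn_sq.div_const 2).add hpow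
  refine ⟨∫ t in Ioi 1, g t, b / 4, by positivity, fun x hxρ => ?_⟩
  have hlow : ∀ t, 1 ≤ t → ∀ i j, i ≠ j →
      b / 2 * t ≤ ‖hypCurve a x φ t i - hypCurve a x φ t j‖ := by
    intro t ht i j hij
    have e : hypCurve a xbar φ t i - hypCurve a xbar φ t j =
        (hypCurve a x φ t i - hypCurve a x φ t j) - ((x - xbar) i - (x - xbar) j) := by
      simp only [hypCurve, Pi.add_apply, Pi.sub_apply, Pi.smul_apply]
      module
    have h1 := hbt i j hij t ht
    rw [e] at h1
    have h2 := norm_sub_le (hypCurve a x φ t i - hypCurve a x φ t j) ((x - xbar) i - (x - xbar) j)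
    have h3 := norm_sub_le ((x - xbar) i) ((x - xbar) j)
    have h4 := norm_le_pi_norm (x - xbar) i
    have h5 := norm_le_pi_norm (x - xbar) j
    nlinarith
  have hcol : ∀ t, 1 ≤ t → ¬ collision (hypCurve a x φ t) := by
    rintro t ht ⟨i, j, hij, h⟩
    have h1 := hlow t ht i j hij
    rw [h, sub_self, norm_zero] at h1
    have : 0 < b / 2 * t := by positivity
    linarith
  have hdiff : ∀ t, 1 ≤ t → |U m (hypCurve a x φ t) - U m (t • a)| ≤
      K / (b / 2) * U m a * t ^ (-2 : ℝ) := fun t ht => by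
    refine abs_U_sub_le hm ha (by positivity) (by linarith) (hlow t ht) fun i j _ =>
      (hdev x t i j).trans ?_
    have : ‖x - a‖ ≤ ‖x - xbar‖ + ‖xbar - a‖ := norm_sub_le_norm_sub_add_norm_sub _ _ _
    rw [hK]
    linarith
  have hmeas : Measurable (U m : Conf d N → ℝ) := by
    unfold U
    refine Finset.measurable_sum _ fun i _ => Finset.measurable_sum _ fun j _ => ?_
    split_ifs
    · fun_prop
    · exact measurable_const
  have hVm : AEStronglyMeasurable (fun t : ℝ => U m (hypCurve a x φ t) - U m (t • a))
      (volume.restrict (Ioi 1)) :=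
    ((hmeas.comp (hcont x).measurable).sub
      (hmeas.comp (measurable_id.smul_const a))).aestronglyMeasurable
  have hle : ∀ t, 1 ≤ t → hypIntegrand m a x φ φ' t ≤ g t := fun t ht => by
    have := (le_abs_self _).trans (hdiff t ht)
    simp only [hg, hypIntegrand]
    linarith
  have hInt : IntegrableOn (hypIntegrand m a x φ φ') (Ioi 1) := by
    have hV : IntegrableOn (fun t : ℝ => U m (hypCurve a x φ t) - U m (t • a)) (Ioi 1) := by
      refine Integrable.mono' hpow hVm ?_
      filter_upwards [ae_restrict_mem measurableSet_Ioi] with t ht using hdiff t (mem_Ioi.1 ht).le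
    refine ((hInD.integrableOn_sq.div_const 2).add hV).congr (ae_of_all _ fun t => ?_)
    simp only [hypIntegrand, Pi.add_apply]
    ring
  refine (hypInf_le_integral hInD hInt ?_).trans (EReal.coe_le_coe_iff.2 ?_)
  · filter_upwards [ae_restrict_mem measurableSet_Ioi] with t ht using hcol t (mem_Ioi.1 ht).le
  · exact setIntegral_mono_on hInt hgi measurableSet_Ioi fun t ht => hle t (mem_Ioi.1 ht).le

/-- Close to the initial time, a motion of bounded energy stays away from collisions. -/
lemma InD.half_le_norm_hypCurve_sub {m : Fin N → ℝ} {φ φ' : ℝ → Conf d N} (h : InD m 1 ⊤ φ φ')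
    (hm : ∀ i, 0 < m i) {μ E : ℝ} (hμ : 0 < μ) (hμm : ∀ i, μ ≤ m i)
    (hE : ∫ t in Ioi 1, mnorm m (φ' t) ^ 2 ≤ E) (a x : Conf d N) {i j : Fin N} (hij : i ≠ j)
    {c τ : ℝ} (hc : 0 ≤ c) (hcx : c ≤ ‖x i - x j‖) (hτ1 : τ ≤ 1)
    (hτ : τ * (4 / μ * E + 2 * ‖a i - a j‖ ^ 2) ≤ (c / 2) ^ 2) {t : ℝ} (ht : 1 ≤ t)
    (htτ : t ≤ 1 + τ) : c / 2 ≤ ‖hypCurve a x φ t i - hypCurve a x φ t j‖ := by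
  have hE0 : 0 ≤ E := (integral_nonneg fun _ => sq_nonneg _).trans hE
  have h1 : ∀ k, hypCurve a x φ 1 k = x k := fun k => by simp [hypCurve, h.1]
  have h2 : ‖(hypCurve a x φ t i - hypCurve a x φ t j) - (x i - x j)‖ ≤ c / 2 := by
    refine abs_le_of_sq_le_sq' ?_ (by positivity) |>.2
    have h3 := h.hypCurve_sub_eq_integral a x le_rfl ht i j
    rw [h1, h1] at h3
    rw [h3]
    calc _ ≤ (t - 1) * ∫ y in Ioc 1 t, ‖relVel a φ' i j y‖ ^ 2 :=
          sq_norm_integral_Ioc_le ht (h.integrableOn_relVel a le_rfl i j)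
            (h.integrableOn_sq_relVel hm hμ hμm a le_rfl hij)
      _ ≤ (t - 1) * (4 / μ * E + 2 * ‖a i - a j‖ ^ 2 * (t - 1)) := by
          gcongr
          exact h.integral_sq_relVel_le hm hμ hμm hE a le_rfl ht hij
      _ ≤ τ * (4 / μ * E + 2 * ‖a i - a j‖ ^ 2) := by
          have h4 : 2 * ‖a i - a j‖ ^ 2 * (t - 1) ≤ 2 * ‖a i - a j‖ ^ 2 :=
            mul_le_of_le_one_right (by positivity) (by linarith)
          have h5 : 0 ≤ 4 / μ * E := by positivity
          exact mul_le_mul (by linarith) (by linarith)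
            (add_nonneg h5 (mul_nonneg (by positivity) (by linarith))) (by linarith)
      _ ≤ _ := hτ
  have h4 : ‖x i - x j‖ ≤ ‖hypCurve a x φ t i - hypCurve a x φ t j‖ +
      ‖(hypCurve a x φ t i - hypCurve a x φ t j) - (x i - x j)‖ := by
    refine le_trans (le_of_eq ?_) (norm_sub_le _ _)
    rw [sub_sub_cancel]
  linarith

lemma exists_pos_le_norm_sub {x : Conf d N} (hx : ¬ collision x) :
    ∃ c > 0, ∀ i j, i ≠ j → c ≤ ‖x i - x j‖ := by
  rcases isEmpty_or_nonempty (Fin N) with h | h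
  · exact ⟨1, one_pos, fun i => isEmptyElim i⟩
  obtain ⟨p, hp⟩ := Finite.exists_min fun p : Fin N × Fin N =>
    if p.1 = p.2 then (1 : ℝ) else ‖x p.1 - x p.2‖
  refine ⟨if p.1 = p.2 then (1 : ℝ) else ‖x p.1 - x p.2‖, ?_, fun i j hij => ?_⟩
  · split_ifs with hpe
    · exact one_pos
    · exact norm_pos_iff.2 (sub_ne_zero.2 fun h => hx ⟨_, _, hpe, h⟩)
  · have := hp (i, j)
    simpa only [if_neg hij] using this

/-- **Uniform distance of minimizing motions from collisions** : for every `x̄ ∈ Ω` there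
are a (relative) open neighborhood `𝒰 ⊆ Ω` of `x̄` and a constant `C > 0` such that for
every `x ∈ 𝒰` and every minimizer `φ` of `A_x` on `D₀^{1,2}(1,+∞)`, the motion
`γ(t) = a t + φ(t) + x − a` stays at mass-distance at least `C` from the collision set `Δ`
for all `t ≥ 1`. -/
theorem minimizers_far_from_collisions {d N : ℕ} (hd : 2 ≤ d) (hN : 2 ≤ N)
    (m : Fin N → ℝ) (hm : ∀ i, 0 < m i)
    (a : Conf d N) (ha : inOmega m a)
    (xbar : Conf d N) (hxbar : inOmega m xbar) :
    ∃ 𝒰 : Set (Conf d N), IsOpen 𝒰 ∧ xbar ∈ 𝒰 ∧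
      (∀ y ∈ 𝒰, inX m y → inOmega m y) ∧
      ∃ C > (0:ℝ), ∀ x ∈ 𝒰, inX m x →
        ∀ φ φ' : ℝ → Conf d N, InD m 1 ⊤ φ φ' →
          hypAction m a x ⊤ φ φ' = hypInf m a x ⊤ →
          ∀ t : ℝ, 1 ≤ t → ∀ y : Conf d N, inX m y → collision y →
            C ≤ mnorm m (hypCurve a x φ t - y) := by
  obtain ⟨μ, hμ, hμm⟩ := exists_pos_le_mass hN hm
  obtain ⟨B, ρ₁, hρ₁, hB⟩ := exists_hypInf_le hd hN hm ha.2 hxbar.2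
  obtain ⟨c, hc, hcx⟩ := exists_pos_le_norm_sub hxbar.2
  set ρ := min ρ₁ (c / 4) with hρ
  have hρ0 : 0 < ρ := by positivity
  have hsep : ∀ x ∈ Metric.ball xbar ρ, ∀ i j, i ≠ j → c / 2 ≤ ‖x i - x j‖ := by
    intro x hx i j hij
    rw [mem_ball_iff_norm] at hx
    have h1 := hcx i j hij
    have h2 : ‖xbar i - xbar j‖ ≤ ‖x i - x j‖ + ‖(x - xbar) i - (x - xbar) j‖ := by
      refine le_trans (le_of_eq (congrArg _ ?_)) (norm_sub_le _ _)
      simp only [Pi.sub_apply]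
      abel
    have h3 := norm_sub_le ((x - xbar) i) ((x - xbar) j)
    have h4 := norm_le_pi_norm (x - xbar) i
    have h5 := norm_le_pi_norm (x - xbar) j
    have h6 : ρ ≤ c / 4 := min_le_right _ _
    linarith
  refine ⟨Metric.ball xbar ρ, Metric.isOpen_ball, Metric.mem_ball_self hρ0,
    fun y hy hyX => ⟨hyX, ?_⟩, ?_⟩
  · rintro ⟨i, j, hij, h⟩
    have := hsep y hy i j hij
    rw [h, sub_self, norm_zero] at this
    linarith
  obtain ⟨E, hE, M, hM, hEM⟩ := exists_energy_bounds hm hμ hμm ha.2 (B := B)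
    (R := ρ + ‖xbar - a‖) (by positivity)
  set K : ℝ := 4 / μ * E + 2 * (2 * ‖a‖) ^ 2 + 1 with hK
  have hK0 : 0 < K := by positivity
  set τ : ℝ := min 1 ((c / 4) ^ 2 / K) with hτ
  have hτ0 : 0 < τ := by positivity
  have hUa := U_nonneg hm a
  have hpair : ∀ p : Fin N × Fin N, ∃ ε > 0, p.1 ≠ p.2 → ∀ (x : Conf d N) (φ φ' : ℝ → Conf d N),
      InD m 1 ⊤ φ φ' → hypAction m a x ⊤ φ φ' = hypInf m a x ⊤ → hypInf m a x ⊤ ≠ ⊤ →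
      ∫ t in Ioi 1, mnorm m (φ' t) ^ 2 ≤ E →
      (∀ t₀, 1 ≤ t₀ - τ → ∫⁻ t in Ioc (t₀ - τ) (t₀ + τ), potE m (hypCurve a x φ t) ≤
        ENNReal.ofReal (M + 2 * τ * U m a)) →
      ∀ t₀, 1 ≤ t₀ - τ → ε ≤ ‖hypCurve a x φ t₀ p.1 - hypCurve a x φ t₀ p.2‖ := by
    rintro ⟨i, j⟩
    have hM' : 0 ≤ M + 2 * τ * U m a := by positivity
    rcases lt_trichotomy i j with hij | hij | hij
    · obtain ⟨ε, hε, H⟩ := exists_pos_le_norm_sub_of_minimizer hd hm hμ hμm a hij hτ0 hE hM'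
      exact ⟨ε, hε, fun _ => H⟩
    · exact ⟨1, one_pos, fun h => absurd hij h⟩
    · obtain ⟨ε, hε, H⟩ := exists_pos_le_norm_sub_of_minimizer hd hm hμ hμm a hij hτ0 hE hM'
      refine ⟨ε, hε, fun _ => ?_⟩
      simpa only [norm_sub_rev (hypCurve a _ _ _ j)] using H
  choose ε hε hεp using hpair
  have hne : Nonempty (Fin N × Fin N) := ⟨(⟨0, by omega⟩, ⟨0, by omega⟩)⟩
  obtain ⟨p₀, hp₀⟩ := Finite.exists_min ε
  have hδ : 0 < min (ε p₀) (c / 2 / 2) := lt_min (hε p₀) (by positivity)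
  refine ⟨√(μ / 2) * min (ε p₀) (c / 2 / 2), by positivity,
    fun x hx _ φ φ' h hmin t ht y _ hy => ?_⟩
  refine le_mnorm_sub_of_collision hm hμ hμm hδ (fun i j hij => ?_) hy
  have hxn : ‖x - xbar‖ < ρ := mem_ball_iff_norm.1 hx
  have hxB : hypInf m a x ⊤ ≤ (B : EReal) := hB x (hxn.le.trans (min_le_left _ _))
  have hfin : hypInf m a x ⊤ ≠ ⊤ := ne_top_of_le_ne_top (EReal.coe_ne_top B) hxB
  obtain ⟨hInt, hcol, hval⟩ := hypAction_ne_top (hmin ▸ hfin)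
  rw [← hmin, hval, EReal.coe_le_coe_iff] at hxB
  have hR : ∀ k, ‖x k - a k‖ ≤ ρ + ‖xbar - a‖ := fun k => by
    have h1 : ‖x - a‖ ≤ ‖x - xbar‖ + ‖xbar - a‖ := norm_sub_le_norm_sub_add_norm_sub _ _ _
    have h2 : ‖x k - a k‖ ≤ ‖x - a‖ := norm_le_pi_norm (x - a) k
    linarith
  obtain ⟨hkin, hpot⟩ := hEM x φ φ' h hR hInt hcol hxB
  rcases le_total t (1 + τ) with htτ | htτ
  · refine (min_le_right _ _).trans (h.half_le_norm_hypCurve_sub hm hμ hμm hkin a x hij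
      (by positivity) (hsep x hx i j hij) (min_le_left _ _) ?_ ht htτ)
    have haij : ‖a i - a j‖ ≤ 2 * ‖a‖ := by
      linarith [norm_sub_le (a i) (a j), norm_le_pi_norm a i, norm_le_pi_norm a j]
    calc τ * (4 / μ * E + 2 * ‖a i - a j‖ ^ 2) ≤ (c / 4) ^ 2 / K * K := by
          gcongr
          · exact min_le_right _ _
          · rw [hK]
            have : ‖a i - a j‖ ^ 2 ≤ (2 * ‖a‖) ^ 2 := by gcongr
            linarith
      _ = (c / 2 / 2) ^ 2 := by field_simp; norm_num
  · exact (min_le_left _ _).trans ((hp₀ (i, j)).trans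
      (hεp (i, j) hij x φ φ' h hmin hfin hkin (hpot τ hτ0) t (by linarith)))

end NBodyHJ
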